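/- arXiv:1909.06193 — 2 statements merged into one kernel-verified Lean document; each statement's English description precedes it below -/
import Mathlib

section
/- (Quantitative form of Theorem 3.) Let X_1,…,X_n, Y_1,…,Y_n (n ≥ 2) be random variables with values in [0,1]^d such that the couples (X_1,Y_1),…,(X_n,Y_n) are pairwise independent and, for every k = 1,…,n, X_k and Y_k have the same distribution, with empirical measures μ_n = (1/n)Σ_{k=1}^n δ_{X_k} and ν_n = (1/n)Σ_{k=1}^n δ_{Y_k}. Then E(W₁(μ_n,ν_n)) ≤ 2/√n if d = 1; E(W₁(μ_n,ν_n)) ≤ 10·√((1 + log n)/n) if d = 2; and E(W₁(μ_n,ν_n)) ≤ 16√d / n^{1/d} if d ≥ 3. -/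
open MeasureTheory ProbabilityTheory Real ENNReal

noncomputable section

/-- Euclidean distance on `Fin d → ℝ`. -/
def euclidDist {d : ℕ} (x y : Fin d → ℝ) : ℝ := Real.sqrt (∑ i, (x i - y i) ^ 2)

/-- `γ` is a coupling of `μ` and `ν`. -/
def IsCoupling {α : Type*} [MeasurableSpace α]
    (γ : Measure (α × α)) (μ ν : Measure α) : Prop :=
  γ.map Prod.fst = μ ∧ γ.map Prod.snd = ν

/-- Optimal transport cost for a cost function `c`. -/
def transportCost {α : Type*} [MeasurableSpace α] (c : α → α → ℝ)
    (μ ν : Measure α) : ℝ≥0∞ :=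
  ⨅ (γ : Measure (α × α)) (_ : IsCoupling γ μ ν),
    ∫⁻ p, ENNReal.ofReal (c p.1 p.2) ∂γ

/-- Euclidean Kantorovich distance `W₁`. -/
def W1 {d : ℕ} (μ ν : Measure (Fin d → ℝ)) : ℝ≥0∞ := transportCost euclidDist μ ν

/-- The empirical measure `(1/n) Σ_k δ_{X_k(ω)}`. -/
def empMeasure {d n : ℕ} {Ω : Type*} [MeasurableSpace Ω]
    (X : Fin n → Ω → (Fin d → ℝ)) (ω : Ω) : Measure (Fin d → ℝ) :=
  (n : ℝ≥0∞)⁻¹ • ∑ k, Measure.dirac (X k ω)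

/-!
By Kantorovich duality on finitely many points, `W₁(μ_n, ν_n)` is the largest value of
`(1/n) ∑ (f(X_k) - f(Y_k))` over `1`-Lipschitz functions `f`. Round the cube to the grid of mesh
`2⁻ᴶ`, which costs `2√d / 2ᴶ`. On the grid, write the unit mass at a point as the uniform
distribution plus the divergence of a flow along the edges: halve the dyadic cube containing the
point again and again, translating the mass of the half that is discarded onto the half that is
kept. Summation by parts then bounds `f(x) - f(y)` by the increments of `f` along the edges, which
are at most `2⁻ᴶ`, against the difference of the flows of `x` and `y`. The coefficients depend on
`f` but the flows do not, so the supremum over `f` disappears, leaving the expectation of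
`∑_e |∑_k (φ_e(X_k) - φ_e(Y_k))|` for fixed functions `φ_e`. The summands over `k` are centred and
pairwise independent, so Cauchy–Schwarz bounds it by the energy `∑_e φ_e²` of a flow. At scale `2ᵐ`
the flow is at most of order `2^(-m(d-1))` with total mass of order `2ᵐ`, so the energy is a
geometric sum of ratio `4 / 2ᵈ`, and the three regimes correspond to `d < 2`, `d = 2` and `d > 2`.
-/

section Duality

/-- `γ` is a transport plan between the weight vectors `p` and `q`: a nonnegative matrix with row
sums `p` and column sums `q`. -/
structure IsTransportPlan {ι κ : Type*} [Fintype ι] [Fintype κ] (p : ι → ℝ) (q : κ → ℝ)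
    (γ : ι × κ → ℝ) : Prop where
  nonneg : ∀ e, 0 ≤ γ e
  row_sum : ∀ i, ∑ j, γ (i, j) = p i
  col_sum : ∀ j, ∑ i, γ (i, j) = q j

/-- The linear map sending a matrix `γ` to its row sums, its column sums and its total cost
`∑ γ c`. -/
def marginalsAndCost {ι κ : Type*} [Fintype ι] [Fintype κ] (c : ι → κ → ℝ) :
    (ι × κ → ℝ) →ₗ[ℝ] (ι → ℝ) × (κ → ℝ) × ℝ where
  toFun γ := (fun i => ∑ j, γ (i, j), fun j => ∑ i, γ (i, j), ∑ i, ∑ j, γ (i, j) * c i j)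
  map_add' γ γ' := by ext <;> simp [Finset.sum_add_distrib, add_mul]
  map_smul' a γ := by ext <;> simp [Finset.mul_sum, mul_assoc]

variable {ι κ : Type*} [Fintype ι] [Fintype κ]

lemma marginalsAndCost_apply (c : ι → κ → ℝ) (γ : ι × κ → ℝ) :
    marginalsAndCost c γ =
      (fun i => ∑ j, γ (i, j), fun j => ∑ i, γ (i, j), ∑ i, ∑ j, γ (i, j) * c i j) :=
  rfl

lemma marginalsAndCost_single [DecidableEq ι] [DecidableEq κ] (c : ι → κ → ℝ) (i : ι) (j : κ) :
    marginalsAndCost c (Pi.single (i, j) 1) = (Pi.single i 1, Pi.single j 1, c i j) := by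
  simp only [marginalsAndCost_apply, Pi.single_apply, Prod.mk.injEq]
  refine ⟨funext fun k => ?_, funext fun k => ?_, by simp [ite_and]⟩
  · by_cases hk : k = i <;> simp [hk]
  · by_cases hk : k = j <;> simp [hk]

lemma mul_mem_stdSimplex_prod {p : ι → ℝ} {q : κ → ℝ} (hp : p ∈ stdSimplex ℝ ι)
    (hq : q ∈ stdSimplex ℝ κ) : (fun e : ι × κ => p e.1 * q e.2) ∈ stdSimplex ℝ (ι × κ) := by
  refine ⟨fun e => mul_nonneg (hp.1 _) (hq.1 _), ?_⟩
  rw [Fintype.sum_prod_type, ← Finset.sum_mul_sum, hp.2, hq.2, one_mul]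

lemma marginalsAndCost_mul {p : ι → ℝ} {q : κ → ℝ} (hp : ∑ i, p i = 1) (hq : ∑ j, q j = 1)
    (c : ι → κ → ℝ) :
    marginalsAndCost c (fun e => p e.1 * q e.2) = (p, q, ∑ i, ∑ j, p i * q j * c i j) := by
  simp only [marginalsAndCost_apply, ← Finset.mul_sum, ← Finset.sum_mul, hp, hq, mul_one, one_mul]

lemma exists_coeff_linearMap_pi_prod_pi_prod (F : (ι → ℝ) × (κ → ℝ) × ℝ →ₗ[ℝ] ℝ) :
    ∃ (φ : ι → ℝ) (ψ : κ → ℝ) (t : ℝ),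
      ∀ u v r, F (u, v, r) = ∑ i, u i * φ i + ∑ j, v j * ψ j + r * t := by
  classical
  refine ⟨fun i => F (fun k => if i = k then 1 else 0, 0, 0),
    fun j => F (0, fun k => if j = k then 1 else 0, 0), F (0, 0, 1), fun u v r => ?_⟩
  have hsplit : (u, v, r) = (u, 0, 0) + (0, v, 0) + r • (0, 0, (1 : ℝ)) := by simp
  have hu := (F ∘ₗ LinearMap.inl ℝ _ _).pi_apply_eq_sum_univ u
  have hv := (F ∘ₗ LinearMap.inr ℝ _ _ ∘ₗ LinearMap.inl ℝ _ _).pi_apply_eq_sum_univ v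
  simp only [LinearMap.comp_apply, LinearMap.inl_apply, LinearMap.inr_apply, smul_eq_mul] at hu hv
  rw [hsplit, map_add, map_add, map_smul, smul_eq_mul, ← hv]
  exact congrArg (· + _ + _) hu

lemma exists_separating_of_forall_plan_cost_gt {p : ι → ℝ} {q : κ → ℝ} (c : ι → κ → ℝ) (C : ℝ)
    (h : ∀ γ, IsTransportPlan p q γ → C < ∑ i, ∑ j, γ (i, j) * c i j) :
    ∃ (F : (ι → ℝ) × (κ → ℝ) × ℝ →ₗ[ℝ] ℝ) (s : ℝ), (∀ r ≤ C, F (p, q, r) < s) ∧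
      ∀ γ ∈ stdSimplex ℝ (ι × κ), s < F (marginalsAndCost c γ) := by
  have hcompact : IsCompact (marginalsAndCost c '' stdSimplex ℝ (ι × κ)) :=
    (isCompact_stdSimplex ℝ _).image (marginalsAndCost c).continuous_of_finiteDimensional
  have hconvex := (convex_stdSimplex ℝ (ι × κ)).linear_image (marginalsAndCost c)
  have hdisj : Disjoint ({p} ×ˢ {q} ×ˢ Set.Iic C)
      (marginalsAndCost c '' stdSimplex ℝ (ι × κ)) := by
    rw [Set.disjoint_right]
    rintro _ ⟨γ, hγ, rfl⟩ ⟨hrow, hcol, hcost⟩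
    exact (h γ ⟨hγ.1, congrFun hrow, congrFun hcol⟩).not_ge hcost
  obtain ⟨F, r, s, hr, hrs, hs⟩ := geometric_hahn_banach_closed_compact
    ((convex_singleton p).prod ((convex_singleton q).prod (convex_Iic C)))
    (isClosed_singleton.prod (isClosed_singleton.prod isClosed_Iic)) hconvex hcompact hdisj
  exact ⟨F, s, fun a ha => (hr (p, q, a) ⟨rfl, rfl, ha⟩).trans hrs,
    fun γ hγ => hs _ (Set.mem_image_of_mem _ hγ)⟩

theorem exists_plan_cost_le_of_forall_dual_le {p : ι → ℝ} {q : κ → ℝ} (hp : p ∈ stdSimplex ℝ ι)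
    (hq : q ∈ stdSimplex ℝ κ) (c : ι → κ → ℝ) (C : ℝ)
    (h : ∀ (φ : ι → ℝ) (ψ : κ → ℝ), (∀ i j, φ i + ψ j ≤ c i j) →
      ∑ i, p i * φ i + ∑ j, q j * ψ j ≤ C) :
    ∃ γ, IsTransportPlan p q γ ∧ ∑ i, ∑ j, γ (i, j) * c i j ≤ C := by
  classical
  by_contra! hno
  obtain ⟨F, s, hlt, hgt⟩ := exists_separating_of_forall_plan_cost_gt c C hno
  obtain ⟨φ, ψ, t, hF⟩ := exists_coeff_linearMap_pi_prod_pi_prod F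
  -- The independent coupling is a competitor, so the cost must enter `F` with positive sign.
  have ht : 0 < t := by
    have hprod := hgt _ (mul_mem_stdSimplex_prod hp hq)
    rw [marginalsAndCost_mul hp.2 hq.2, hF] at hprod
    have hmin := hlt _ (min_le_left C (∑ i, ∑ j, p i * q j * c i j))
    rw [hF] at hmin
    by_contra! ht
    have := mul_le_mul_of_nonpos_right (min_le_right C (∑ i, ∑ j, p i * q j * c i j)) ht
    linarith
  have hfeasible : ∀ i j, (s - φ i) / t + -ψ j / t ≤ c i j := by
    intro i j
    have hij := hgt _ (single_mem_stdSimplex ℝ (i, j))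
    rw [marginalsAndCost_single, hF] at hij
    simp only [Pi.single_apply, ite_mul, one_mul, zero_mul, Finset.sum_ite_eq', Finset.mem_univ,
      if_true] at hij
    rw [← add_div, div_le_iff₀ ht]
    linarith
  have hvalue : ∑ i, p i * ((s - φ i) / t) + ∑ j, q j * (-ψ j / t) =
      (s - ∑ i, p i * φ i - ∑ j, q j * ψ j) / t := by
    simp only [← mul_div_assoc, ← Finset.sum_div, mul_sub, mul_neg, Finset.sum_sub_distrib,
      ← Finset.sum_mul, hp.2, Finset.sum_neg_distrib]
    ring
  have hdual := h _ _ hfeasible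
  rw [hvalue, div_le_iff₀ ht] at hdual
  have hC := hlt C le_rfl
  rw [hF] at hC
  linarith

/-- `f` is `1`-Lipschitz with respect to the cost `c`. The inequality is one-sided, so that `c`
may be asymmetric. -/
def CostLipschitz {α : Type*} (c : α → α → ℝ) (f : α → ℝ) : Prop :=
  ∀ x y, f x - f y ≤ c x y

variable {α : Type*} {c : α → α → ℝ}

lemma costLipschitz_inf' [Nonempty κ] (htri : ∀ x y z, c x z ≤ c x y + c y z) (y : κ → α)
    (ψ : κ → ℝ) :
    CostLipschitz c fun z => Finset.univ.inf' Finset.univ_nonempty fun j => c z (y j) - ψ j := by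
  intro z w
  obtain ⟨j, -, hj⟩ := Finset.exists_mem_eq_inf' (Finset.univ_nonempty (α := κ))
    fun j => c w (y j) - ψ j
  have hz := Finset.inf'_le (fun j => c z (y j) - ψ j) (Finset.mem_univ j)
  dsimp only
  linarith [htri z w (y j)]

theorem exists_plan_cost_le_of_forall_costLipschitz (hself : ∀ x, c x x = 0)
    (htri : ∀ x y z, c x z ≤ c x y + c y z) {p : ι → ℝ} {q : κ → ℝ} (hp : p ∈ stdSimplex ℝ ι)
    (hq : q ∈ stdSimplex ℝ κ) (x : ι → α) (y : κ → α) (C : ℝ)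
    (h : ∀ f, CostLipschitz c f → ∑ i, p i * f (x i) - ∑ j, q j * f (y j) ≤ C) :
    ∃ γ, IsTransportPlan p q γ ∧ ∑ i, ∑ j, γ (i, j) * c (x i) (y j) ≤ C := by
  have : Nonempty κ := by
    by_contra! hκ
    simpa using hq.2
  refine exists_plan_cost_le_of_forall_dual_le hp hq _ C fun φ ψ hφψ => ?_
  -- Replacing `φ` and `ψ` by the `c`-transform of `ψ` and its negative only increases the value.
  let f : α → ℝ := fun z => Finset.univ.inf' Finset.univ_nonempty fun j => c z (y j) - ψ j
  have hφ : ∀ i, φ i ≤ f (x i) := fun i =>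
    Finset.le_inf' _ _ fun j _ => le_sub_iff_add_le.2 (hφψ i j)
  have hψ : ∀ j, ψ j ≤ -f (y j) := fun j => by
    have := Finset.inf'_le (fun k => c (y j) (y k) - ψ k) (Finset.mem_univ j)
    rw [hself, zero_sub] at this
    exact le_neg_of_le_neg this
  calc ∑ i, p i * φ i + ∑ j, q j * ψ j
      ≤ ∑ i, p i * f (x i) + ∑ j, q j * -f (y j) := by
        gcongr with i _ j _
        exacts [hp.1 i, hφ i, hq.1 j, hψ j]
    _ = ∑ i, p i * f (x i) - ∑ j, q j * f (y j) := by
        simp only [mul_neg, Finset.sum_neg_distrib, sub_eq_add_neg]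
    _ ≤ C := h f (costLipschitz_inf' htri y ψ)

end Duality

section TransportCost

variable {ι κ α : Type*} [Fintype ι] [Fintype κ] [MeasurableSpace α]

lemma IsCoupling.transportCost_le {γ : Measure (α × α)} {μ ν : Measure α}
    (hγ : IsCoupling γ μ ν) {c : α → α → ℝ} :
    transportCost c μ ν ≤ ∫⁻ z, ENNReal.ofReal (c z.1 z.2) ∂γ :=
  iInf₂_le γ hγ

lemma IsTransportPlan.isCoupling_sum_dirac {p : ι → ℝ} {q : κ → ℝ} {γ : ι × κ → ℝ}
    (hγ : IsTransportPlan p q γ) (x : ι → α) (y : κ → α) :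
    IsCoupling (∑ i, ∑ j, ENNReal.ofReal (γ (i, j)) • Measure.dirac (x i, y j))
      (∑ i, ENNReal.ofReal (p i) • Measure.dirac (x i))
      (∑ j, ENNReal.ofReal (q j) • Measure.dirac (y j)) := by
  simp only [IsCoupling, Measure.map_finset_sum measurable_fst.aemeasurable,
    Measure.map_finset_sum measurable_snd.aemeasurable, Measure.map_smul,
    Measure.map_dirac' measurable_fst, Measure.map_dirac' measurable_snd]
  constructor
  · refine Finset.sum_congr rfl fun i _ => ?_
    rw [← Finset.sum_smul, ← ENNReal.ofReal_sum_of_nonneg fun _ _ => hγ.nonneg _, hγ.row_sum]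
  · rw [Finset.sum_comm]
    refine Finset.sum_congr rfl fun j _ => ?_
    rw [← Finset.sum_smul, ← ENNReal.ofReal_sum_of_nonneg fun _ _ => hγ.nonneg _, hγ.col_sum]

lemma IsTransportPlan.transportCost_sum_dirac_le [MeasurableSingletonClass α] {p : ι → ℝ}
    {q : κ → ℝ} {γ : ι × κ → ℝ} (hγ : IsTransportPlan p q γ) {c : α → α → ℝ}
    (hc : ∀ x y, 0 ≤ c x y) (x : ι → α) (y : κ → α) :
    transportCost c (∑ i, ENNReal.ofReal (p i) • Measure.dirac (x i))
      (∑ j, ENNReal.ofReal (q j) • Measure.dirac (y j)) ≤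
        ENNReal.ofReal (∑ i, ∑ j, γ (i, j) * c (x i) (y j)) := by
  have hnonneg : ∀ i j, 0 ≤ γ (i, j) * c (x i) (y j) := fun i j =>
    mul_nonneg (hγ.nonneg _) (hc _ _)
  refine (hγ.isCoupling_sum_dirac x y).transportCost_le.trans_eq ?_
  simp only [lintegral_finsetSum_measure, lintegral_smul_measure, lintegral_dirac, smul_eq_mul]
  rw [ENNReal.ofReal_sum_of_nonneg fun _ _ => Finset.sum_nonneg fun _ _ => hnonneg _ _]
  simp only [ENNReal.ofReal_sum_of_nonneg fun _ _ => hnonneg _ _,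
    ENNReal.ofReal_mul (hγ.nonneg _)]

end TransportCost

section EuclidDist

variable {d : ℕ}

lemma euclidDist_eq_dist_toLp (x y : Fin d → ℝ) :
    euclidDist x y = dist (WithLp.toLp 2 x) (WithLp.toLp 2 y) := by
  simp [euclidDist, EuclideanSpace.dist_eq, Real.dist_eq, sq_abs]

lemma euclidDist_self (x : Fin d → ℝ) : euclidDist x x = 0 := by
  simp [euclidDist_eq_dist_toLp]

lemma euclidDist_comm (x y : Fin d → ℝ) : euclidDist x y = euclidDist y x := by
  simp only [euclidDist_eq_dist_toLp, dist_comm]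

lemma euclidDist_triangle (x y z : Fin d → ℝ) :
    euclidDist x z ≤ euclidDist x y + euclidDist y z := by
  simpa only [euclidDist_eq_dist_toLp] using dist_triangle _ _ _

lemma euclidDist_le_sqrt_mul {x y : Fin d → ℝ} {δ : ℝ} (hδ : 0 ≤ δ) (h : ∀ i, |x i - y i| ≤ δ) :
    euclidDist x y ≤ √d * δ := by
  have hsum : ∑ i, (x i - y i) ^ 2 ≤ d * δ ^ 2 := by
    simpa using Finset.sum_le_card_nsmul Finset.univ _ _ fun i _ => sq_le_sq' (abs_le.1 (h i)).1
      (abs_le.1 (h i)).2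
  calc euclidDist x y ≤ √(d * δ ^ 2) := Real.sqrt_le_sqrt hsum
    _ = √d * δ := by rw [Real.sqrt_mul (Nat.cast_nonneg d), Real.sqrt_sq hδ]

lemma euclidDist_add_single_self (x : Fin d → ℝ) (i : Fin d) (t : ℝ) :
    euclidDist (x + Pi.single i t) x = |t| := by
  simp [euclidDist, Pi.single_apply, Real.sqrt_sq_eq_abs]

lemma CostLipschitz.abs_sub_le_euclidDist {f : (Fin d → ℝ) → ℝ} (hf : CostLipschitz euclidDist f)
    (x y : Fin d → ℝ) : |f x - f y| ≤ euclidDist x y :=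
  abs_sub_le_iff.2 ⟨hf x y, euclidDist_comm x y ▸ hf y x⟩

lemma empMeasure_eq_sum_ofReal_smul_dirac {n : ℕ} (hn : 0 < n) {Ω : Type*} [MeasurableSpace Ω]
    (X : Fin n → Ω → Fin d → ℝ) (ω : Ω) :
    empMeasure X ω = ∑ k, ENNReal.ofReal (1 / n) • Measure.dirac (X k ω) := by
  rw [empMeasure, Finset.smul_sum, one_div, ENNReal.ofReal_inv_of_pos (Nat.cast_pos.2 hn),
    ENNReal.ofReal_natCast]

theorem W1_empMeasure_le_of_forall_costLipschitz {n : ℕ} (hn : 0 < n) {Ω : Type*}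
    [MeasurableSpace Ω] (X Y : Fin n → Ω → Fin d → ℝ) (ω : Ω) (C : ℝ)
    (h : ∀ f, CostLipschitz euclidDist f → (∑ k, (f (X k ω) - f (Y k ω))) / n ≤ C) :
    W1 (empMeasure X ω) (empMeasure Y ω) ≤ ENNReal.ofReal C := by
  have hweights : (fun _ => 1 / n : Fin n → ℝ) ∈ stdSimplex ℝ (Fin n) :=
    ⟨fun _ => by positivity, by simp [hn.ne']⟩
  obtain ⟨γ, hγ, hcost⟩ := exists_plan_cost_le_of_forall_costLipschitz euclidDist_self
    euclidDist_triangle hweights hweights (X · ω) (Y · ω) C fun f hf => by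
      rw [← Finset.mul_sum, ← Finset.mul_sum, ← mul_sub, ← Finset.sum_sub_distrib,
        one_div_mul_eq_div]
      exact h f hf
  rw [empMeasure_eq_sum_ofReal_smul_dirac hn, empMeasure_eq_sum_ofReal_smul_dirac hn]
  exact (hγ.transportCost_sum_dirac_le (fun _ _ => Real.sqrt_nonneg _) _ _).trans
    (ENNReal.ofReal_le_ofReal hcost)

end EuclidDist

section Variance

variable {Ω : Type*} [MeasurableSpace Ω] {P : Measure Ω} [IsProbabilityMeasure P]

lemma sq_integral_abs_le_integral_sq {Z : Ω → ℝ} (hZ : MemLp Z 2 P) :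
    (∫ ω, |Z ω| ∂P) ^ 2 ≤ ∫ ω, Z ω ^ 2 ∂P := by
  have hvar := variance_nonneg |Z| P
  rw [variance_eq_sub hZ.abs] at hvar
  simpa only [Pi.pow_apply, Pi.abs_apply, sq_abs, sub_nonneg] using hvar

lemma integral_sq_sum_of_pairwise_indepFun {κ : Type*} [Fintype κ] {D : κ → Ω → ℝ}
    (hD : ∀ k, MemLp (D k) 2 P) (hmean : ∀ k, ∫ ω, D k ω ∂P = 0)
    (hindep : Pairwise fun j k => IndepFun (D j) (D k) P) :
    ∫ ω, (∑ k, D k ω) ^ 2 ∂P = ∑ k, ∫ ω, D k ω ^ 2 ∂P := by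
  have hsum : MemLp (∑ k, D k) 2 P := memLp_finsetSum' _ fun k _ => hD k
  have hsum_mean : ∫ ω, (∑ k, D k) ω ∂P = 0 := by
    simp only [Finset.sum_apply]
    rw [integral_finsetSum _ fun k _ => (hD k).integrable one_le_two]
    exact Finset.sum_eq_zero fun k _ => hmean k
  have hvar := IndepFun.variance_sum (fun k (_ : k ∈ Finset.univ) => hD k) (hindep.set_pairwise _)
  simpa only [variance_of_integral_eq_zero hsum.aemeasurable hsum_mean, Finset.sum_apply,
    fun k => variance_of_integral_eq_zero (hD k).aemeasurable (hmean k)] using hvar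

end Variance

/-- The pairs `(X k, Y k)` are measurable and pairwise independent, and `X k` and `Y k` have the
same distribution. Within a pair `X k` and `Y k` may be dependent, and their common distribution may
vary with `k`. -/
structure IsMatchedSample {Ω α κ : Type*} [MeasurableSpace Ω] [MeasurableSpace α] (P : Measure Ω)
    (X Y : κ → Ω → α) : Prop where
  measurable_left : ∀ k, Measurable (X k)
  measurable_right : ∀ k, Measurable (Y k)
  indepFun : Pairwise fun j k => IndepFun (fun ω => (X j ω, Y j ω)) (fun ω => (X k ω, Y k ω)) P
  map_eq : ∀ k, P.map (X k) = P.map (Y k)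

namespace IsMatchedSample

variable {Ω α κ : Type*} [MeasurableSpace Ω] [MeasurableSpace α] {P : Measure Ω}
  {X Y : κ → Ω → α}

lemma integral_sub_eq_zero [IsFiniteMeasure P] (h : IsMatchedSample P X Y) {φ : α → ℝ} {B : ℝ}
    (hφ : Measurable φ) (hB : ∀ x, |φ x| ≤ B) (k : κ) :
    ∫ ω, (φ (X k ω) - φ (Y k ω)) ∂P = 0 := by
  have hint : ∀ {Z : Ω → α}, Measurable Z → Integrable (fun ω => φ (Z ω)) P := fun hZ =>
    .of_bound (hφ.comp hZ).aestronglyMeasurable B (.of_forall fun _ => hB _)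
  rw [integral_sub (hint (h.measurable_left k)) (hint (h.measurable_right k)),
    ← integral_map (h.measurable_left k).aemeasurable hφ.aestronglyMeasurable,
    ← integral_map (h.measurable_right k).aemeasurable hφ.aestronglyMeasurable, h.map_eq, sub_self]

lemma memLp_sub [IsFiniteMeasure P] (h : IsMatchedSample P X Y) {φ : α → ℝ} {B : ℝ}
    (hφ : Measurable φ) (hB : ∀ x, |φ x| ≤ B) (k : κ) :
    MemLp (fun ω => φ (X k ω) - φ (Y k ω)) 2 P :=
  .of_bound ((hφ.comp (h.measurable_left k)).sub
    (hφ.comp (h.measurable_right k))).aestronglyMeasurable (B + B)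
    (.of_forall fun _ => (abs_sub _ _).trans (add_le_add (hB _) (hB _)))

lemma indepFun_sub (h : IsMatchedSample P X Y) {φ : α → ℝ} (hφ : Measurable φ) :
    Pairwise fun j k => IndepFun (fun ω => φ (X j ω) - φ (Y j ω))
      (fun ω => φ (X k ω) - φ (Y k ω)) P := fun _ _ hjk =>
  have hsub : Measurable fun z : α × α => φ z.1 - φ z.2 :=
    (hφ.comp measurable_fst).sub (hφ.comp measurable_snd)
  (h.indepFun hjk).comp hsub hsub

variable [Fintype κ] [IsProbabilityMeasure P]

lemma sq_integral_abs_sum_sub_le (h : IsMatchedSample P X Y) {φ : α → ℝ} {B : ℝ}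
    (hφ : Measurable φ) (hB : ∀ x, |φ x| ≤ B) :
    (∫ ω, |∑ k, (φ (X k ω) - φ (Y k ω))| ∂P) ^ 2 ≤
      ∑ k, ∫ ω, (φ (X k ω) - φ (Y k ω)) ^ 2 ∂P :=
  (sq_integral_abs_le_integral_sq (memLp_finsetSum _ fun k _ => h.memLp_sub hφ hB k)).trans_eq <|
    integral_sq_sum_of_pairwise_indepFun (h.memLp_sub hφ hB) (h.integral_sub_eq_zero hφ hB)
      (h.indepFun_sub hφ)

lemma integrable_abs_sum_sub (h : IsMatchedSample P X Y) {φ : α → ℝ} {B : ℝ}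
    (hφ : Measurable φ) (hB : ∀ x, |φ x| ≤ B) :
    Integrable (fun ω => |∑ k, (φ (X k ω) - φ (Y k ω))|) P :=
  (integrable_finsetSum _ fun k _ => (h.memLp_sub hφ hB k).integrable one_le_two).abs

theorem integral_sum_abs_sum_sub_le (h : IsMatchedSample P X Y) {I : Type*} (s : Finset I)
    {φ : I → α → ℝ} {B : I → ℝ} {M : ℝ} (hφ : ∀ i, Measurable (φ i)) (hB : ∀ i x, |φ i x| ≤ B i)
    (hM : ∀ x y, ∑ i ∈ s, (φ i x - φ i y) ^ 2 ≤ M) :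
    ∫ ω, ∑ i ∈ s, |∑ k, (φ i (X k ω) - φ i (Y k ω))| ∂P ≤ √(s.card * (Fintype.card κ * M)) := by
  have hsq := fun i k => (h.memLp_sub (hφ i) (hB i) k).integrable_sq
  have hterm : ∀ k, ∑ i ∈ s, ∫ ω, (φ i (X k ω) - φ i (Y k ω)) ^ 2 ∂P ≤ M := fun k => by
    rw [← integral_finsetSum _ fun i _ => hsq i k]
    simpa using integral_mono (integrable_finsetSum _ fun i _ => hsq i k)
      (integrable_const M) fun ω => hM (X k ω) (Y k ω)
  rw [integral_finsetSum _ fun i _ => h.integrable_abs_sum_sub (hφ i) (hB i)]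
  refine Real.le_sqrt_of_sq_le ?_
  calc (∑ i ∈ s, ∫ ω, |∑ k, (φ i (X k ω) - φ i (Y k ω))| ∂P) ^ 2
      ≤ s.card * ∑ i ∈ s, (∫ ω, |∑ k, (φ i (X k ω) - φ i (Y k ω))| ∂P) ^ 2 :=
        sq_sum_le_card_mul_sum_sq
    _ ≤ s.card * ∑ i ∈ s, ∑ k, ∫ ω, (φ i (X k ω) - φ i (Y k ω)) ^ 2 ∂P := by
        gcongr with i
        exact h.sq_integral_abs_sum_sub_le (hφ i) (hB i)
    _ ≤ s.card * (Fintype.card κ * M) := by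
        rw [Finset.sum_comm]
        gcongr
        simpa using Finset.sum_le_card_nsmul Finset.univ _ _ fun k _ => hterm k

end IsMatchedSample

section EmpiricalMeasure

variable {d n : ℕ} {Ω I : Type*} [MeasurableSpace Ω] {X Y : Fin n → Ω → Fin d → ℝ}
  {K : Set (Fin d → ℝ)} {φ : I → (Fin d → ℝ) → ℝ} {ε w : ℝ}

lemma W1_empMeasure_le_sum_abs (hn : 0 < n) {ω : Ω} (hX : ∀ k, X k ω ∈ K)
    (hY : ∀ k, Y k ω ∈ K) (s : Finset I)
    (hf : ∀ f, CostLipschitz euclidDist f → ∃ a : I → ℝ, (∀ i, |a i| ≤ w) ∧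
      ∀ x ∈ K, ∀ y ∈ K, f x - f y ≤ ε + ∑ i ∈ s, a i * (φ i x - φ i y)) :
    W1 (empMeasure X ω) (empMeasure Y ω) ≤
      ENNReal.ofReal (ε + w / n * ∑ i ∈ s, |∑ k, (φ i (X k ω) - φ i (Y k ω))|) := by
  refine W1_empMeasure_le_of_forall_costLipschitz hn X Y ω _ fun f hflip => ?_
  obtain ⟨a, ha, hfa⟩ := hf f hflip
  have hn' : (0 : ℝ) < n := Nat.cast_pos.2 hn
  rw [div_le_iff₀ hn', add_mul, mul_right_comm, div_mul_cancel₀ _ hn'.ne']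
  calc ∑ k, (f (X k ω) - f (Y k ω))
      ≤ ∑ k, (ε + ∑ i ∈ s, a i * (φ i (X k ω) - φ i (Y k ω))) :=
        Finset.sum_le_sum fun k _ => hfa _ (hX k) _ (hY k)
    _ = ε * n + ∑ i ∈ s, a i * ∑ k, (φ i (X k ω) - φ i (Y k ω)) := by
        rw [Finset.sum_add_distrib, Finset.sum_comm, Fin.sum_const, nsmul_eq_mul, mul_comm ε]
        simp only [Finset.mul_sum]
    _ ≤ ε * n + w * ∑ i ∈ s, |∑ k, (φ i (X k ω) - φ i (Y k ω))| := by
        rw [Finset.mul_sum]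
        gcongr ε * n + ?_
        refine Finset.sum_le_sum fun i _ => (le_abs_self _).trans ?_
        rw [abs_mul]
        exact mul_le_mul_of_nonneg_right (ha i) (abs_nonneg _)

theorem IsMatchedSample.lintegral_W1_empMeasure_le {P : Measure Ω} [IsProbabilityMeasure P]
    (h : IsMatchedSample P X Y) (hn : 0 < n) (hX : ∀ k ω, X k ω ∈ K) (hY : ∀ k ω, Y k ω ∈ K)
    (s : Finset I) {B : I → ℝ} {M : ℝ} (hφ : ∀ i, Measurable (φ i)) (hB : ∀ i x, |φ i x| ≤ B i)
    (hM : ∀ x y, ∑ i ∈ s, (φ i x - φ i y) ^ 2 ≤ M) (hε : 0 ≤ ε) (hw : 0 ≤ w)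
    (hf : ∀ f, CostLipschitz euclidDist f → ∃ a : I → ℝ, (∀ i, |a i| ≤ w) ∧
      ∀ x ∈ K, ∀ y ∈ K, f x - f y ≤ ε + ∑ i ∈ s, a i * (φ i x - φ i y)) :
    ∫⁻ ω, W1 (empMeasure X ω) (empMeasure Y ω) ∂P ≤
      ENNReal.ofReal (ε + w * √(s.card * M / n)) := by
  have hn' : (0 : ℝ) < n := Nat.cast_pos.2 hn
  let S : Ω → ℝ := fun ω => ∑ i ∈ s, |∑ k, (φ i (X k ω) - φ i (Y k ω))|
  have hS_int : Integrable S P :=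
    integrable_finsetSum _ fun i _ => h.integrable_abs_sum_sub (hφ i) (hB i)
  have hS_le : ∫ ω, S ω ∂P ≤ n * √(s.card * M / n) := by
    refine (h.integral_sum_abs_sum_sub_le s hφ hB hM).trans_eq ?_
    rw [Fintype.card_fin, show (s.card : ℝ) * (n * M) = n ^ 2 * (s.card * M / n) by field_simp,
      Real.sqrt_mul (sq_nonneg _), Real.sqrt_sq hn'.le]
  calc ∫⁻ ω, W1 (empMeasure X ω) (empMeasure Y ω) ∂P
      ≤ ∫⁻ ω, ENNReal.ofReal (ε + w / n * S ω) ∂P :=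
        lintegral_mono fun ω => W1_empMeasure_le_sum_abs hn (hX · ω) (hY · ω) s hf
    _ = ENNReal.ofReal (ε + w / n * ∫ ω, S ω ∂P) := by
        have hint := hS_int.const_mul (w / n)
        rw [← ofReal_integral_eq_lintegral_ofReal (integrable_const_add_iff.2 hint)
          (.of_forall fun ω => by positivity), integral_add (integrable_const ε) hint,
          integral_const, probReal_univ, one_smul, integral_const_mul]
    _ ≤ ENNReal.ofReal (ε + w / n * (n * √(s.card * M / n))) := by gcongr
    _ = ENNReal.ofReal (ε + w * √(s.card * M / n)) := by
        rw [← mul_assoc, div_mul_cancel₀ _ hn'.ne']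

end EmpiricalMeasure

section Hybrid

variable {d N : ℕ}

/-- The grid `{0, …, N - 1}ᵈ`, as a set of vectors of natural numbers so that the neighbours
`e + Pi.single i 1` need no boundary convention. -/
abbrev natGrid (d N : ℕ) : Finset (Fin d → ℕ) :=
  Fintype.piFinset fun _ => Finset.range N

/-- The family that agrees with `q` before the index `i`, with `s` at `i` and with `p` after `i`.
Moving `i` along `Fin d` interpolates between `p` and `q`. -/
def hybrid {β : Type*} (i : Fin d) (q s p : Fin d → β) (l : Fin d) : β :=
  if l < i then q l else if l = i then s l else p l

section

variable {β : Type*} (q s p : Fin (d + 1) → β)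

lemma hybrid_zero_zero : hybrid 0 q s p 0 = s 0 := by simp [hybrid]

lemma hybrid_zero_succ (l : Fin d) : hybrid 0 q s p l.succ = p l.succ := by simp [hybrid]

lemma hybrid_succ_zero (i : Fin d) : hybrid i.succ q s p 0 = q 0 := by simp [hybrid]

lemma hybrid_succ_succ (i l : Fin d) :
    hybrid i.succ q s p l.succ =
      hybrid i (fun l => q l.succ) (fun l => s l.succ) (fun l => p l.succ) l := by
  simp [hybrid]

end

lemma prod_hybrid_const {R : Type*} [CommMonoid R] (i : Fin d) (q s p : R) :
    ∏ l, hybrid i (fun _ => q) (fun _ => s) (fun _ => p) l =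
      q ^ (i : ℕ) * s * p ^ (d - 1 - i) := by
  induction d with
  | zero => exact i.elim0
  | succ d ih =>
    cases i using Fin.cases with
    | zero => simp [Fin.prod_univ_succ, hybrid_zero_zero, hybrid_zero_succ]
    | succ i =>
      have hexp : d + 1 - 1 - ((i : ℕ) + 1) = d - 1 - i := by omega
      simp only [Fin.prod_univ_succ, hybrid_succ_zero, hybrid_succ_succ, ih, hexp, Fin.val_succ,
        pow_succ', mul_assoc]

lemma sum_natGrid_succ {R : Type*} [AddCommMonoid R] (F : (Fin (d + 1) → ℕ) → R) :
    ∑ e ∈ natGrid (d + 1) N, F e =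
      ∑ c ∈ Finset.range N, ∑ e ∈ natGrid d N, F (Fin.cons c e) := by
  rw [← Finset.sum_product']
  refine Finset.sum_nbij' (fun e => (e 0, Fin.tail e)) (fun z => Fin.cons z.1 z.2) ?_ ?_ ?_ ?_ ?_
  · simp +contextual [Fin.tail]
  · simp [Fin.forall_fin_succ]
  all_goals simp

lemma cons_add_single_zero (c : ℕ) (e : Fin d → ℕ) :
    (Fin.cons c e : Fin (d + 1) → ℕ) + Pi.single 0 1 = Fin.cons (c + 1) e := by
  ext l
  cases l using Fin.cases <;> simp

lemma cons_add_single_succ (c : ℕ) (e : Fin d → ℕ) (i : Fin d) :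
    (Fin.cons c e : Fin (d + 1) → ℕ) + Pi.single i.succ 1 = Fin.cons c (e + Pi.single i 1) := by
  ext l
  cases l using Fin.cases <;> simp [Pi.single_apply]

theorem sum_sum_prod_hybrid_mul_sub {p q s : Fin d → ℕ → ℝ}
    (h : ∀ (l : Fin d) (u : ℕ → ℝ), ∑ c ∈ Finset.range N, s l c * (u (c + 1) - u c) =
      ∑ c ∈ Finset.range N, p l c * u c - ∑ c ∈ Finset.range N, q l c * u c)
    (G : (Fin d → ℕ) → ℝ) :
    ∑ i, ∑ e ∈ natGrid d N, (∏ l, hybrid i q s p l (e l)) * (G (e + Pi.single i 1) - G e) =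
      ∑ e ∈ natGrid d N, (∏ l, p l (e l)) * G e - ∑ e ∈ natGrid d N, (∏ l, q l (e l)) * G e := by
  induction d with
  | zero => simp
  | succ d ih =>
    simp only [Fin.sum_univ_succ, sum_natGrid_succ, Fin.prod_univ_succ, hybrid_zero_zero,
      hybrid_zero_succ, hybrid_succ_zero, hybrid_succ_succ, cons_add_single_zero,
      cons_add_single_succ, Fin.cons_zero, Fin.cons_succ]
    have hhead : ∑ c ∈ Finset.range N, ∑ e ∈ natGrid d N, s 0 c * (∏ l : Fin d, p l.succ (e l)) *
          (G (Fin.cons (c + 1) e) - G (Fin.cons c e)) =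
        ∑ c ∈ Finset.range N, ∑ e ∈ natGrid d N,
          (p 0 c - q 0 c) * ((∏ l : Fin d, p l.succ (e l)) * G (Fin.cons c e)) := by
      rw [Finset.sum_comm, Finset.sum_comm (s := Finset.range N)]
      refine Finset.sum_congr rfl fun e _ => ?_
      have hcoord := congrArg ((∏ l : Fin d, p l.succ (e l)) * ·) (h 0 fun c => G (Fin.cons c e))
      simp only [← Finset.sum_sub_distrib, Finset.mul_sum] at hcoord
      convert hcoord using 2 <;> ring
    have htail : ∑ i : Fin d, ∑ c ∈ Finset.range N, ∑ e ∈ natGrid d N, q 0 c *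
          (∏ l, hybrid i (fun l => q l.succ) (fun l => s l.succ) (fun l => p l.succ) l (e l)) *
          (G (Fin.cons c (e + Pi.single i 1)) - G (Fin.cons c e)) =
        ∑ c ∈ Finset.range N, q 0 c * (∑ e ∈ natGrid d N,
          (∏ l : Fin d, p l.succ (e l)) * G (Fin.cons c e) -
            ∑ e ∈ natGrid d N, (∏ l : Fin d, q l.succ (e l)) * G (Fin.cons c e)) := by
      rw [Finset.sum_comm]
      refine Finset.sum_congr rfl fun c _ => ?_
      rw [← ih (fun l => h l.succ) fun e => G (Fin.cons c e)]
      simp only [Finset.mul_sum, mul_assoc]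
    rw [hhead, htail, ← Finset.sum_add_distrib, ← Finset.sum_sub_distrib]
    refine Finset.sum_congr rfl fun c _ => ?_
    simp only [mul_assoc, ← Finset.mul_sum]
    ring

end Hybrid

section SegmentIndicator

/-- Indicator function of the integer segment `{b, …, b + l - 1}`. -/
def segmentIndicator (b l c : ℕ) : ℝ := if c ∈ Finset.Ico b (b + l) then 1 else 0

variable {b l : ℕ}

lemma segmentIndicator_nonneg (c : ℕ) : 0 ≤ segmentIndicator b l c := by
  unfold segmentIndicator
  split_ifs <;> norm_num

lemma segmentIndicator_le_one (c : ℕ) : segmentIndicator b l c ≤ 1 := by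
  unfold segmentIndicator
  split_ifs <;> norm_num

lemma sum_segmentIndicator_le (s : Finset ℕ) : ∑ c ∈ s, segmentIndicator b l c ≤ l := by
  have hcard : (s.filter (· ∈ Finset.Ico b (b + l))).card ≤ (Finset.Ico b (b + l)).card :=
    Finset.card_le_card fun c hc => (Finset.mem_filter.1 hc).2
  simp only [segmentIndicator, Finset.sum_boole]
  simpa using Nat.cast_le (α := ℝ).2 hcard

lemma sum_segmentIndicator_mul {N : ℕ} (hN : b + l ≤ N) (v : ℕ → ℝ) :
    ∑ c ∈ Finset.range N, segmentIndicator b l c * v c = ∑ j ∈ Finset.range l, v (b + j) := by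
  have hsub : Finset.range N ∩ Finset.Ico b (b + l) = Finset.Ico b (b + l) :=
    Finset.inter_eq_right.2 fun c hc =>
      Finset.mem_range.2 ((Finset.mem_Ico.1 hc).2.trans_le hN)
  simp only [segmentIndicator, ite_mul, one_mul, zero_mul, Finset.sum_ite_mem, hsub]
  rw [Finset.sum_Ico_eq_sum_range, Nat.add_sub_cancel_left]

end SegmentIndicator

section Dyadic

variable (m a : ℕ)

/-- The left endpoint of the dyadic block of length `2 ^ m` that contains `a`. -/
def blockStart : ℕ := 2 ^ m * (a / 2 ^ m)

/-- Density at `c` of the uniform distribution on the dyadic block of length `2 ^ m` that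
contains `a`. -/
def blockKernel (c : ℕ) : ℝ := (2 ^ m)⁻¹ * segmentIndicator (blockStart m a) (2 ^ m) c

/-- Flow through the edge `c → c + 1` that turns the uniform distribution on the dyadic block of
length `2 ^ (m + 1)` containing `a` into the one on its half of length `2 ^ m` containing `a`: the
mass `1 / 2 ^ (m + 1)` at each point of the other half is translated by `2 ^ m`, to the left if
`a` lies in the left half and to the right otherwise. -/
def halvingFlow (c : ℕ) : ℝ :=
  (-1) ^ (a / 2 ^ m + 1) * (2 ^ (m + 1))⁻¹ *
    ∑ j ∈ Finset.range (2 ^ m), segmentIndicator (blockStart (m + 1) a + j) (2 ^ m) c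

lemma blockStart_eq_succ_add :
    blockStart m a = blockStart (m + 1) a + 2 ^ m * (a / 2 ^ m % 2) := by
  rw [blockStart, blockStart, pow_succ, mul_assoc, ← mul_add, ← Nat.div_div_eq_div_mul,
    Nat.div_add_mod]

variable {m a} in
lemma blockStart_add_le {J : ℕ} (hm : m ≤ J) (ha : a < 2 ^ J) :
    blockStart m a + 2 ^ m ≤ 2 ^ J := by
  obtain ⟨k, rfl⟩ := Nat.exists_eq_add_of_le hm
  rw [pow_add] at ha ⊢
  rw [blockStart, ← Nat.mul_succ]
  exact Nat.mul_le_mul_left _ (Nat.div_lt_of_lt_mul ha)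

lemma blockKernel_zero (c : ℕ) : blockKernel 0 a c = if c = a then 1 else 0 := by
  simp [blockKernel, blockStart, segmentIndicator]

variable {m a} in
lemma blockKernel_of_lt (ha : a < 2 ^ m) : blockKernel m a = blockKernel m 0 := by
  funext c
  simp only [blockKernel, blockStart, Nat.div_eq_of_lt ha, Nat.zero_div]

lemma abs_blockKernel (c : ℕ) :
    |blockKernel m a c| = (2 ^ m)⁻¹ * segmentIndicator (blockStart m a) (2 ^ m) c :=
  abs_of_nonneg (mul_nonneg (by positivity) (segmentIndicator_nonneg c))

lemma abs_blockKernel_le (c : ℕ) : |blockKernel m a c| ≤ (2 ^ m)⁻¹ := by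
  rw [abs_blockKernel]
  exact mul_le_of_le_one_right (by positivity) (segmentIndicator_le_one c)

lemma sum_abs_blockKernel_le (s : Finset ℕ) : ∑ c ∈ s, |blockKernel m a c| ≤ 1 := by
  simp only [abs_blockKernel, ← Finset.mul_sum]
  rw [inv_mul_le_one₀ (by positivity)]
  exact_mod_cast sum_segmentIndicator_le s

lemma abs_halvingFlow (c : ℕ) :
    |halvingFlow m a c| = (2 ^ (m + 1))⁻¹ *
      ∑ j ∈ Finset.range (2 ^ m), segmentIndicator (blockStart (m + 1) a + j) (2 ^ m) c := by
  rw [halvingFlow, abs_mul, abs_mul, abs_neg_one_pow, one_mul, abs_of_nonneg (by positivity),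
    abs_of_nonneg (Finset.sum_nonneg fun _ _ => segmentIndicator_nonneg c)]

lemma abs_halvingFlow_le (c : ℕ) : |halvingFlow m a c| ≤ 1 / 2 := by
  have hcount : ∑ j ∈ Finset.range (2 ^ m),
      segmentIndicator (blockStart (m + 1) a + j) (2 ^ m) c ≤ 2 ^ m := by
    simpa using Finset.sum_le_card_nsmul (Finset.range (2 ^ m)) _ _ fun j _ =>
      segmentIndicator_le_one (b := blockStart (m + 1) a + j) (l := 2 ^ m) c
  rw [abs_halvingFlow, inv_mul_le_iff₀ (by positivity), pow_succ]
  linarith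

lemma sum_abs_halvingFlow_le (s : Finset ℕ) : ∑ c ∈ s, |halvingFlow m a c| ≤ 2 ^ m / 2 := by
  have hcount : ∑ j ∈ Finset.range (2 ^ m), ∑ c ∈ s,
      segmentIndicator (blockStart (m + 1) a + j) (2 ^ m) c ≤ 2 ^ m * 2 ^ m := by
    simpa using Finset.sum_le_card_nsmul (Finset.range (2 ^ m)) _ _ fun j _ =>
      sum_segmentIndicator_le (b := blockStart (m + 1) a + j) (l := 2 ^ m) s
  simp only [abs_halvingFlow, ← Finset.mul_sum]
  rw [Finset.sum_comm, inv_mul_le_iff₀ (by positivity), pow_succ]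
  linarith

variable {m a} {J : ℕ}

lemma sum_blockKernel_mul (hm : m ≤ J) (ha : a < 2 ^ J) (u : ℕ → ℝ) :
    ∑ c ∈ Finset.range (2 ^ J), blockKernel m a c * u c =
      (2 ^ m)⁻¹ * ∑ j ∈ Finset.range (2 ^ m), u (blockStart m a + j) := by
  simp only [blockKernel, mul_assoc, ← Finset.mul_sum]
  rw [sum_segmentIndicator_mul (blockStart_add_le hm ha)]

lemma sum_halvingFlow_mul_sub (hm : m < J) (ha : a < 2 ^ J) (u : ℕ → ℝ) :
    ∑ c ∈ Finset.range (2 ^ J), halvingFlow m a c * (u (c + 1) - u c) =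
      (-1) ^ (a / 2 ^ m + 1) * (2 ^ (m + 1))⁻¹ * ∑ j ∈ Finset.range (2 ^ m),
        (u (blockStart (m + 1) a + 2 ^ m + j) - u (blockStart (m + 1) a + j)) := by
  simp only [halvingFlow, mul_assoc, ← Finset.mul_sum, Finset.sum_mul]
  rw [Finset.sum_comm]
  congr 2
  refine Finset.sum_congr rfl fun j hj => ?_
  have hend : blockStart (m + 1) a + j + 2 ^ m ≤ 2 ^ J := by
    have hblock := blockStart_add_le hm ha
    rw [pow_succ] at hblock
    linarith [Finset.mem_range.1 hj]
  rw [sum_segmentIndicator_mul hend fun c => u (c + 1) - u c]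
  exact (Finset.sum_range_sub (fun i => u (blockStart (m + 1) a + j + i)) _).trans
    (by rw [add_zero, add_right_comm])

theorem sum_halvingFlow_mul_sub_eq_sum_blockKernel_sub (hm : m < J) (ha : a < 2 ^ J)
    (u : ℕ → ℝ) :
    ∑ c ∈ Finset.range (2 ^ J), halvingFlow m a c * (u (c + 1) - u c) =
      ∑ c ∈ Finset.range (2 ^ J), blockKernel m a c * u c -
        ∑ c ∈ Finset.range (2 ^ J), blockKernel (m + 1) a c * u c := by
  rw [sum_halvingFlow_mul_sub hm ha, sum_blockKernel_mul hm.le ha, sum_blockKernel_mul hm ha,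
    Finset.sum_sub_distrib, blockStart_eq_succ_add m a]
  have hsplit : ∑ j ∈ Finset.range (2 ^ (m + 1)), u (blockStart (m + 1) a + j) =
      ∑ j ∈ Finset.range (2 ^ m), u (blockStart (m + 1) a + j) +
        ∑ j ∈ Finset.range (2 ^ m), u (blockStart (m + 1) a + 2 ^ m + j) := by
    simp only [pow_succ, mul_two, Finset.sum_range_add, add_assoc]
  rw [hsplit]
  obtain hparity | hparity := Nat.mod_two_eq_zero_or_one (a / 2 ^ m)
  · have hsign : (-1 : ℝ) ^ (a / 2 ^ m + 1) = -1 :=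
      (Nat.even_iff.2 hparity).add_one.neg_one_pow
    rw [hsign, hparity, mul_zero, add_zero, pow_succ]
    field_simp
    ring
  · have hsign : (-1 : ℝ) ^ (a / 2 ^ m + 1) = 1 := (Nat.odd_iff.2 hparity).add_one.neg_one_pow
    rw [hsign, hparity, mul_one, pow_succ]
    field_simp
    ring

end Dyadic

section Energy

lemma sum_mul_le_mul_of_abs_le {ι : Type*} {s : Finset ι} {u v : ι → ℝ} {α β : ℝ}
    (hα : 0 ≤ α) (hu : ∀ e, |u e| ≤ α) (hv : ∑ e ∈ s, |v e| ≤ β) :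
    ∑ e ∈ s, u e * v e ≤ α * β :=
  calc ∑ e ∈ s, u e * v e ≤ ∑ e ∈ s, α * |v e| := Finset.sum_le_sum fun e _ =>
        (le_abs_self _).trans ((abs_mul _ _).trans_le (by gcongr; exact hu e))
    _ = α * ∑ e ∈ s, |v e| := (Finset.mul_sum _ _ _).symm
    _ ≤ α * β := by gcongr

lemma sum_sq_sum_range_le {ι : Type*} (s : Finset ι) {A : ℕ → ι → ℝ} {α β : ℕ → ℝ}
    (hα : ∀ m, 0 ≤ α m) (hA : ∀ m e, |A m e| ≤ α m) (hsum : ∀ m, ∑ e ∈ s, |A m e| ≤ β m) (J : ℕ) :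
    ∑ e ∈ s, (∑ m ∈ Finset.range J, A m e) ^ 2 ≤
      ∑ m ∈ Finset.range J, α m * (β m + 2 * ∑ k ∈ Finset.range m, β k) := by
  induction J with
  | zero => simp
  | succ J ih =>
    have hcross : ∑ e ∈ s, A J e * (A J e + 2 * ∑ m ∈ Finset.range J, A m e) ≤
        α J * (β J + 2 * ∑ m ∈ Finset.range J, β m) := by
      refine sum_mul_le_mul_of_abs_le (hα J) (hA J) ?_
      calc ∑ e ∈ s, |A J e + 2 * ∑ m ∈ Finset.range J, A m e|
          ≤ ∑ e ∈ s, (|A J e| + 2 * ∑ m ∈ Finset.range J, |A m e|) := by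
            refine Finset.sum_le_sum fun e _ => (abs_add_le _ _).trans ?_
            rw [abs_mul, abs_two]
            gcongr
            exact Finset.abs_sum_le_sum_abs _ _
        _ = ∑ e ∈ s, |A J e| + 2 * ∑ m ∈ Finset.range J, ∑ e ∈ s, |A m e| := by
            rw [Finset.sum_add_distrib, ← Finset.mul_sum, Finset.sum_comm]
        _ ≤ β J + 2 * ∑ m ∈ Finset.range J, β m := by
            gcongr with m
            exacts [hsum J, hsum m]
    calc ∑ e ∈ s, (∑ m ∈ Finset.range (J + 1), A m e) ^ 2
        = ∑ e ∈ s, (∑ m ∈ Finset.range J, A m e) ^ 2 +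
            ∑ e ∈ s, A J e * (A J e + 2 * ∑ m ∈ Finset.range J, A m e) := by
          rw [← Finset.sum_add_distrib]
          refine Finset.sum_congr rfl fun e _ => ?_
          rw [Finset.sum_range_succ]
          ring
      _ ≤ _ := by
          rw [Finset.sum_range_succ]
          exact add_le_add ih hcross

end Energy

section DyadicFlow

variable {d : ℕ}

/-- Flow through the edge `e → e + Pi.single i 1` that turns the uniform distribution on the dyadic
cube of side `2 ^ (m + 1)` containing `a` into the one on the subcube of side `2 ^ m` containing
`a`. The sides are halved one coordinate after the other. -/
def scaleFlow (m : ℕ) (a : Fin d → ℕ) (i : Fin d) (e : Fin d → ℕ) : ℝ :=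
  ∏ l, hybrid i (fun l => blockKernel (m + 1) (a l)) (fun l => halvingFlow m (a l))
    (fun l => blockKernel m (a l)) l (e l)

/-- Flow through the edge `e → e + Pi.single i 1` that turns the uniform distribution on
`natGrid d (2 ^ J)` into the unit mass at `a`, one dyadic scale at a time. -/
def dyadicFlow (J : ℕ) (a : Fin d → ℕ) (i : Fin d) (e : Fin d → ℕ) : ℝ :=
  ∑ m ∈ Finset.range J, scaleFlow m a i e

lemma abs_scaleFlow_le (m : ℕ) (a : Fin d → ℕ) (i : Fin d) (e : Fin d → ℕ) :
    |scaleFlow m a i e| ≤ (2 ^ (m + 1))⁻¹ ^ (i : ℕ) * (1 / 2) * (2 ^ m)⁻¹ ^ (d - 1 - i) := by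
  rw [scaleFlow, Finset.abs_prod, ← prod_hybrid_const]
  refine Finset.prod_le_prod (fun _ _ => abs_nonneg _) fun l _ => ?_
  unfold hybrid
  split_ifs
  exacts [abs_blockKernel_le _ _ _, abs_halvingFlow_le _ _ _, abs_blockKernel_le _ _ _]

lemma sum_abs_scaleFlow_le (N m : ℕ) (a : Fin d → ℕ) (i : Fin d) :
    ∑ e ∈ natGrid d N, |scaleFlow m a i e| ≤ 2 ^ m / 2 := by
  have hconst : (2 : ℝ) ^ m / 2 =
      ∏ l, hybrid i (fun _ => 1) (fun _ => 2 ^ m / 2) (fun _ => 1) l := by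
    simp [prod_hybrid_const]
  simp only [scaleFlow, Finset.abs_prod]
  rw [← Finset.prod_univ_sum (fun _ => Finset.range N) fun l c => |hybrid i
    (fun l => blockKernel (m + 1) (a l)) (fun l => halvingFlow m (a l))
    (fun l => blockKernel m (a l)) l c|, hconst]
  refine Finset.prod_le_prod (fun _ _ => Finset.sum_nonneg fun _ _ => abs_nonneg _) fun l _ => ?_
  unfold hybrid
  split_ifs
  exacts [sum_abs_blockKernel_le _ _ _, sum_abs_halvingFlow_le _ _ _, sum_abs_blockKernel_le _ _ _]

theorem sum_dyadicFlow_mul_sub {J : ℕ} {a : Fin d → ℕ} (ha : ∀ l, a l < 2 ^ J)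
    (G : (Fin d → ℕ) → ℝ) :
    ∑ i, ∑ e ∈ natGrid d (2 ^ J), dyadicFlow J a i e * (G (e + Pi.single i 1) - G e) =
      G a - ∑ e ∈ natGrid d (2 ^ J), (∏ l, blockKernel J 0 (e l)) * G e := by
  let avg : ℕ → ℝ := fun m => ∑ e ∈ natGrid d (2 ^ J), (∏ l, blockKernel m (a l) (e l)) * G e
  have hscale : ∀ m ∈ Finset.range J, ∑ i, ∑ e ∈ natGrid d (2 ^ J),
      scaleFlow m a i e * (G (e + Pi.single i 1) - G e) = avg m - avg (m + 1) := fun m hm =>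
    sum_sum_prod_hybrid_mul_sub (fun l u =>
      sum_halvingFlow_mul_sub_eq_sum_blockKernel_sub (Finset.mem_range.1 hm) (ha l) u) G
  have hzero : avg 0 = G a := by
    have hprod : ∀ e : Fin d → ℕ, ∏ l, blockKernel 0 (a l) (e l) = if e = a then 1 else 0 :=
      fun e => by simp [blockKernel_zero, Finset.prod_ite_zero, funext_iff]
    simp only [avg, hprod, ite_mul, one_mul, zero_mul, Finset.sum_ite_eq']
    exact if_pos (Fintype.mem_piFinset.2 fun l => Finset.mem_range.2 (ha l))
  have htop : avg J = ∑ e ∈ natGrid d (2 ^ J), (∏ l, blockKernel J 0 (e l)) * G e := by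
    simp only [avg, fun l => blockKernel_of_lt (ha l)]
  calc ∑ i, ∑ e ∈ natGrid d (2 ^ J), dyadicFlow J a i e * (G (e + Pi.single i 1) - G e)
      = ∑ m ∈ Finset.range J, ∑ i, ∑ e ∈ natGrid d (2 ^ J),
          scaleFlow m a i e * (G (e + Pi.single i 1) - G e) := by
        simp only [dyadicFlow, Finset.sum_mul]
        rw [Finset.sum_comm (s := Finset.range J)]
        exact Finset.sum_congr rfl fun i _ => Finset.sum_comm
    _ = avg 0 - avg J := by rw [Finset.sum_congr rfl hscale, Finset.sum_range_sub']
    _ = _ := by rw [hzero, htop]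

lemma sum_sq_dyadicFlow_le (N J : ℕ) (a : Fin d → ℕ) (i : Fin d) :
    ∑ e ∈ natGrid d N, dyadicFlow J a i e ^ 2 ≤
      3 / 4 * (1 / 2) ^ (i : ℕ) * ∑ m ∈ Finset.range J, (4 / 2 ^ d : ℝ) ^ m := by
  refine (sum_sq_sum_range_le _ (fun m => by positivity) (fun m => abs_scaleFlow_le m a i)
    (fun m => sum_abs_scaleFlow_le N m a i) J).trans ?_
  rw [Finset.mul_sum]
  refine Finset.sum_le_sum fun m _ => ?_
  have hgeom : (2 : ℝ) ^ m / 2 + 2 * ∑ k ∈ Finset.range m, 2 ^ k / 2 ≤ 3 / 2 * 2 ^ m := by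
    rw [← Finset.sum_div, geom_sum_eq (by norm_num)]
    linarith
  calc (2 ^ (m + 1))⁻¹ ^ (i : ℕ) * (1 / 2) * (2 ^ m)⁻¹ ^ (d - 1 - i) *
        ((2 : ℝ) ^ m / 2 + 2 * ∑ k ∈ Finset.range m, 2 ^ k / 2)
      ≤ (2 ^ (m + 1))⁻¹ ^ (i : ℕ) * (1 / 2) * (2 ^ m)⁻¹ ^ (d - 1 - i) * (3 / 2 * 2 ^ m) := by
        gcongr
    _ = 3 / 4 * (1 / 2) ^ (i : ℕ) * (4 / 2 ^ d : ℝ) ^ m := by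
        have hratio : (4 / 2 ^ d : ℝ) ^ m = (2 ^ m) ^ 2 / (2 ^ m) ^ d := by
          rw [div_pow, ← pow_mul, ← pow_mul, ← pow_mul, mul_comm d, mul_comm m 2, pow_mul 2 2]
          norm_num
        have hsplit : ((2 : ℝ) ^ m) ^ d = (2 ^ m) ^ (i : ℕ) * 2 ^ m * (2 ^ m) ^ (d - 1 - i) := by
          rw [← pow_succ, ← pow_add]
          congr 1
          omega
        rw [hratio, hsplit, inv_pow, inv_pow, one_div_pow, pow_succ, mul_pow]
        field_simp
        ring

end DyadicFlow

section GridCell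

/-- The index `j < N` of a cell `[j / N, (j + 1) / N]` of the unit interval that contains `t`; the
minimum puts `t = 1` into the last cell. -/
def gridCell (N : ℕ) (t : ℝ) : ℕ := min ⌊N * t⌋₊ (N - 1)

variable {N : ℕ}

lemma gridCell_lt (hN : 0 < N) (t : ℝ) : gridCell N t < N :=
  (min_le_right _ _).trans_lt (Nat.sub_one_lt hN.ne')

lemma measurable_gridCell : Measurable (gridCell N) :=
  (Nat.measurable_floor.comp (measurable_const_mul _)).min measurable_const

lemma abs_sub_gridCell_div_le (hN : 0 < N) {t : ℝ} (ht : t ∈ Set.Icc (0 : ℝ) 1) :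
    |t - gridCell N t / N| ≤ 1 / N := by
  have hN' : (0 : ℝ) < N := Nat.cast_pos.2 hN
  have hNt : 0 ≤ N * t := mul_nonneg hN'.le ht.1
  have hlower : (gridCell N t : ℝ) ≤ N * t :=
    (Nat.cast_le.2 (min_le_left _ _)).trans (Nat.floor_le hNt)
  have hupper : N * t ≤ gridCell N t + 1 := by
    rw [gridCell, Nat.cast_min, ← min_add_add_right, Nat.cast_pred hN, sub_add_cancel]
    exact le_min (Nat.lt_floor_add_one _).le (mul_le_of_le_one_right hN'.le ht.2)
  rw [show t - gridCell N t / N = (N * t - gridCell N t) / N by field_simp, abs_div,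
    abs_of_pos hN']
  gcongr
  exact abs_le.2 ⟨by linarith, by linarith⟩

end GridCell

section DyadicApproximation

variable {d : ℕ} {f : (Fin d → ℝ) → ℝ}

lemma CostLipschitz.abs_sub_gridCell_le (hf : CostLipschitz euclidDist f) {N : ℕ} (hN : 0 < N)
    {x : Fin d → ℝ} (hx : ∀ i, x i ∈ Set.Icc (0 : ℝ) 1) :
    |f x - f fun i => gridCell N (x i) / N| ≤ √d / N :=
  (hf.abs_sub_le_euclidDist _ _).trans <| (euclidDist_le_sqrt_mul (by positivity) fun i =>
    abs_sub_gridCell_div_le hN (hx i)).trans_eq (mul_one_div _ _)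

lemma CostLipschitz.abs_sub_div_le (hf : CostLipschitz euclidDist f) (N : ℕ) (e : Fin d → ℕ)
    (i : Fin d) :
    |(f fun l => (e + Pi.single i 1 : Fin d → ℕ) l / N) - f fun l => e l / N| ≤ 1 / N := by
  have hstep : (fun l => ((e + Pi.single i 1 : Fin d → ℕ) l / N : ℝ)) =
      (fun l => (e l / N : ℝ)) + Pi.single i (1 / N : ℝ) := by
    ext l
    by_cases hl : l = i <;> simp [hl, add_div]
  rw [hstep]
  exact (hf.abs_sub_le_euclidDist _ _).trans_eq
    ((euclidDist_add_single_self _ _ _).trans (abs_of_nonneg (by positivity)))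

theorem CostLipschitz.exists_sub_le_sum_dyadicFlow (hf : CostLipschitz euclidDist f) (J : ℕ) :
    ∃ b : Fin d × (Fin d → ℕ) → ℝ, (∀ z, |b z| ≤ 1 / 2 ^ J) ∧
      ∀ x, (∀ i, x i ∈ Set.Icc (0 : ℝ) 1) → ∀ y, (∀ i, y i ∈ Set.Icc (0 : ℝ) 1) →
        f x - f y ≤ 2 * √d / 2 ^ J + ∑ z ∈ Finset.univ ×ˢ natGrid d (2 ^ J),
          b z * (dyadicFlow J (fun i => gridCell (2 ^ J) (x i)) z.1 z.2 -
            dyadicFlow J (fun i => gridCell (2 ^ J) (y i)) z.1 z.2) := by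
  have hN : 0 < 2 ^ J := by positivity
  let G : (Fin d → ℕ) → ℝ := fun e => f fun l => e l / (2 ^ J : ℕ)
  refine ⟨fun z => G (z.2 + Pi.single z.1 1) - G z.2,
    fun z => (hf.abs_sub_div_le (2 ^ J) z.2 z.1).trans_eq (by push_cast; rfl), fun x hx y hy => ?_⟩
  have hflow := fun x : Fin d → ℝ =>
    sum_dyadicFlow_mul_sub (a := fun i => gridCell (2 ^ J) (x i)) (fun i => gridCell_lt hN (x i)) G
  have hx' := (abs_le.1 (hf.abs_sub_gridCell_le hN hx)).2
  have hy' := (abs_le.1 (hf.abs_sub_gridCell_le hN hy)).1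
  simp only [mul_sub _ (dyadicFlow _ _ _ _), Finset.sum_sub_distrib, Finset.sum_product,
    mul_comm (G _ - G _), hflow, mul_div_assoc]
  push_cast at hx' hy'
  simp only [G]
  push_cast
  linarith

end DyadicApproximation

section DyadicRate

variable {d : ℕ}

/-- Bound for the sum of the squares of `dyadicFlow J` over all edges of the grid. -/
def flowEnergy (d J : ℕ) : ℝ :=
  3 / 4 * (∑ i ∈ Finset.range d, (1 / 2) ^ i) * ∑ m ∈ Finset.range J, (4 / 2 ^ d) ^ m

lemma sum_sum_sq_dyadicFlow_le (N J : ℕ) (a : Fin d → ℕ) :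
    ∑ z ∈ Finset.univ ×ˢ natGrid d N, dyadicFlow J a z.1 z.2 ^ 2 ≤ flowEnergy d J := by
  rw [Finset.sum_product, flowEnergy, Finset.sum_range, Finset.mul_sum Finset.univ, Finset.sum_mul]
  exact Finset.sum_le_sum fun i _ => sum_sq_dyadicFlow_le N J a i

lemma sum_sq_sub_le_four_mul {ι : Type*} {s : Finset ι} {u v : ι → ℝ} {M : ℝ}
    (hu : ∑ i ∈ s, u i ^ 2 ≤ M) (hv : ∑ i ∈ s, v i ^ 2 ≤ M) :
    ∑ i ∈ s, (u i - v i) ^ 2 ≤ 4 * M :=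
  calc ∑ i ∈ s, (u i - v i) ^ 2 ≤ ∑ i ∈ s, (2 * u i ^ 2 + 2 * v i ^ 2) :=
        Finset.sum_le_sum fun i _ => by nlinarith only [sq_nonneg (u i + v i)]
    _ = 2 * ∑ i ∈ s, u i ^ 2 + 2 * ∑ i ∈ s, v i ^ 2 := by
        rw [Finset.sum_add_distrib, ← Finset.mul_sum, ← Finset.mul_sum]
    _ ≤ 4 * M := by linarith

/-- The bound for the expected Kantorovich distance given by the grid of mesh `2⁻ᴶ`: the first term
is the discretisation error, the second one the expected fluctuation of the flows. -/
def dyadicRate (d n J : ℕ) : ℝ :=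
  2 * √d / 2 ^ J + 1 / 2 ^ J * √(d * (2 ^ J) ^ d * (4 * flowEnergy d J) / n)

theorem IsMatchedSample.lintegral_W1_empMeasure_le_dyadicRate {n : ℕ} {Ω : Type*}
    [MeasurableSpace Ω] {P : Measure Ω} [IsProbabilityMeasure P] {X Y : Fin n → Ω → Fin d → ℝ}
    (h : IsMatchedSample P X Y) (hn : 0 < n) (hX : ∀ k ω i, X k ω i ∈ Set.Icc (0 : ℝ) 1)
    (hY : ∀ k ω i, Y k ω i ∈ Set.Icc (0 : ℝ) 1) (J : ℕ) :
    ∫⁻ ω, W1 (empMeasure X ω) (empMeasure Y ω) ∂P ≤ ENNReal.ofReal (dyadicRate d n J) := by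
  have hcell : Measurable fun (x : Fin d → ℝ) i => gridCell (2 ^ J) (x i) :=
    measurable_pi_lambda _ fun i => measurable_gridCell.comp (measurable_pi_apply i)
  let φ : Fin d × (Fin d → ℕ) → (Fin d → ℝ) → ℝ := fun z x =>
    dyadicFlow J (fun i => gridCell (2 ^ J) (x i)) z.1 z.2
  have hφ_meas : ∀ z, Measurable (φ z) := fun z =>
    (measurable_of_countable fun a => dyadicFlow J a z.1 z.2).comp hcell
  have hφ_bdd : ∀ z x, |φ z x| ≤ ∑ m ∈ Finset.range J,
      (2 ^ (m + 1))⁻¹ ^ (z.1 : ℕ) * (1 / 2) * (2 ^ m)⁻¹ ^ (d - 1 - z.1) := fun z x =>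
    (Finset.abs_sum_le_sum_abs _ _).trans
      (Finset.sum_le_sum fun m _ => abs_scaleFlow_le m _ z.1 z.2)
  have hφ_sq : ∀ x y, ∑ z ∈ Finset.univ ×ˢ natGrid d (2 ^ J), (φ z x - φ z y) ^ 2 ≤
      4 * flowEnergy d J := fun x y =>
    sum_sq_sub_le_four_mul (sum_sum_sq_dyadicFlow_le _ J _) (sum_sum_sq_dyadicFlow_le _ J _)
  refine (h.lintegral_W1_empMeasure_le hn (K := {x | ∀ i, x i ∈ Set.Icc (0 : ℝ) 1}) hX hY _
    hφ_meas hφ_bdd hφ_sq (by positivity) (by positivity) fun f hf =>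
      hf.exists_sub_le_sum_dyadicFlow J).trans_eq ?_
  simp only [Finset.card_product, Finset.card_univ, Fintype.card_fin, Fintype.card_piFinset_const,
    Finset.card_range, dyadicRate]
  push_cast
  rfl

end DyadicRate

section ChoiceOfScale

variable {d n : ℕ}

lemma exists_pow_le_and_rpow_le (hd : d ≠ 0) (hn : n ≠ 0) :
    ∃ J : ℕ, ((2 : ℝ) ^ J) ^ d ≤ n ∧ (n : ℝ) ^ (1 / d : ℝ) ≤ 2 * 2 ^ J := by
  refine ⟨Nat.log (2 ^ d) n, ?_, ?_⟩
  · rw [pow_right_comm]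
    exact_mod_cast Nat.pow_log_le_self (2 ^ d) hn
  · rw [one_div, Real.rpow_inv_le_iff_of_pos (by positivity) (by positivity) (by positivity),
      Real.rpow_natCast, ← pow_succ', pow_right_comm]
    exact_mod_cast (Nat.lt_pow_succ_log_self (Nat.one_lt_two_pow hd) n).le

lemma flowEnergy_one_le (J : ℕ) : flowEnergy 1 J ≤ 3 / 4 * 2 ^ J := by
  have hgeom : ∑ m ∈ Finset.range J, (2 : ℝ) ^ m ≤ 2 ^ J := by
    rw [geom_sum_eq (by norm_num)]
    linarith
  norm_num [flowEnergy, hgeom]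

lemma flowEnergy_two (J : ℕ) : flowEnergy 2 J = 9 / 8 * J := by
  norm_num [flowEnergy, Finset.sum_range_succ]

lemma flowEnergy_le_of_three_le (hd : 3 ≤ d) (J : ℕ) : flowEnergy d J ≤ 3 := by
  have hgeom : ∀ k, ∑ i ∈ Finset.range k, (1 / 2 : ℝ) ^ i ≤ 2 := sum_geometric_two_le
  have hratio : (4 / 2 ^ d : ℝ) ≤ 1 / 2 := by
    rw [div_le_div_iff₀ (by positivity) two_pos]
    linarith [pow_le_pow_right₀ one_le_two hd (M₀ := ℝ)]
  calc flowEnergy d J ≤ 3 / 4 * 2 * ∑ m ∈ Finset.range J, (1 / 2 : ℝ) ^ m := by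
        unfold flowEnergy
        gcongr
        exact hgeom d
    _ ≤ 3 / 4 * 2 * 2 := by gcongr; exact hgeom J
    _ = 3 := by norm_num

lemma exists_dyadicRate_one_le (hn : 0 < n) : ∃ J, dyadicRate 1 n J ≤ 2 / √n := by
  have hsqrt : 0 < √(n : ℝ) := Real.sqrt_pos.2 (Nat.cast_pos.2 hn)
  obtain ⟨J, hJ⟩ := pow_unbounded_of_one_lt (8 * √n) one_lt_two
  refine ⟨J, ?_⟩
  have hmesh : 2 / 2 ^ J ≤ 1 / 4 / √n := by
    rw [div_le_div_iff₀ (by positivity) hsqrt]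
    linarith
  have hfluct : √(2 ^ J * (4 * flowEnergy 1 J) / n) ≤ 2 ^ J * (7 / 4 / √n) := by
    refine Real.sqrt_le_iff.2 ⟨by positivity, ?_⟩
    rw [mul_pow, div_pow, Real.sq_sqrt n.cast_nonneg, mul_div_assoc']
    refine div_le_div_of_nonneg_right ?_ n.cast_nonneg
    nlinarith only [flowEnergy_one_le J, pow_pos (two_pos (α := ℝ)) J]
  calc dyadicRate 1 n J = 2 / 2 ^ J + 1 / 2 ^ J * √(2 ^ J * (4 * flowEnergy 1 J) / n) := by
        simp only [dyadicRate, Nat.cast_one, Real.sqrt_one, mul_one, one_mul, pow_one]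
    _ ≤ 1 / 4 / √n + 1 / 2 ^ J * (2 ^ J * (7 / 4 / √n)) := by gcongr
    _ = 2 / √n := by field_simp; norm_num

lemma natCast_le_log_of_sq_two_pow_le {J : ℕ} {t : ℝ} (h : (2 ^ J) ^ 2 ≤ t) :
    J ≤ Real.log t := by
  have hlog := Real.log_le_log (by positivity) h
  rw [Real.log_pow, Real.log_pow] at hlog
  push_cast at hlog
  nlinarith only [hlog, Real.log_two_gt_d9, J.cast_nonneg (α := ℝ)]

lemma exists_dyadicRate_two_le (hn : 0 < n) :
    ∃ J, dyadicRate 2 n J ≤ 10 * √((1 + Real.log n) / n) := by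
  obtain ⟨J, hpow, hroot⟩ := exists_pow_le_and_rpow_le two_ne_zero hn.ne'
  refine ⟨J, ?_⟩
  rw [Nat.cast_ofNat, ← Real.sqrt_eq_rpow] at hroot
  set L := Real.log n
  have hL : 0 ≤ L := Real.log_natCast_nonneg n
  have hmesh : 2 * √2 / 2 ^ J ≤ 6 * √((1 + L) / n) := by
    have hsqrt_two : √2 ≤ 3 / 2 := Real.sqrt_le_iff.2 (by norm_num)
    calc 2 * √2 / 2 ^ J ≤ 6 / √n := by
          rw [div_le_div_iff₀ (by positivity) (by positivity)]
          nlinarith only [hroot, hsqrt_two, Real.sqrt_nonneg n]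
      _ ≤ 6 * √((1 + L) / n) := by
          rw [Real.sqrt_div (by positivity), ← mul_div_assoc]
          gcongr
          linarith [Real.one_le_sqrt.2 (le_add_of_nonneg_right hL)]
  have hfluct : √(2 * (2 ^ J) ^ 2 * (4 * flowEnergy 2 J) / n) ≤ 2 ^ J * (3 * √((1 + L) / n)) := by
    refine Real.sqrt_le_iff.2 ⟨by positivity, ?_⟩
    calc 2 * (2 ^ J) ^ 2 * (4 * flowEnergy 2 J) / n = (2 ^ J) ^ 2 * (9 * (J / n)) := by
          rw [flowEnergy_two]
          ring
      _ ≤ (2 ^ J) ^ 2 * (9 * ((1 + L) / n)) := by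
          gcongr
          linarith [natCast_le_log_of_sq_two_pow_le hpow]
      _ = (2 ^ J * (3 * √((1 + L) / n))) ^ 2 := by
          rw [mul_pow, mul_pow, Real.sq_sqrt (by positivity)]
          norm_num
  calc dyadicRate 2 n J ≤ 6 * √((1 + L) / n) + 1 / 2 ^ J * (2 ^ J * (3 * √((1 + L) / n))) := by
        unfold dyadicRate
        push_cast
        gcongr
    _ = 9 * √((1 + L) / n) := by field_simp; norm_num
    _ ≤ 10 * √((1 + L) / n) := by gcongr; norm_num

lemma exists_dyadicRate_le_of_three_le (hd : 3 ≤ d) (hn : 0 < n) :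
    ∃ J, dyadicRate d n J ≤ 16 * √d / (n : ℝ) ^ (1 / d : ℝ) := by
  have hn' : (0 : ℝ) < n := Nat.cast_pos.2 hn
  obtain ⟨J, hpow, hroot⟩ := exists_pow_le_and_rpow_le (by omega : d ≠ 0) hn.ne'
  refine ⟨J, ?_⟩
  have hfluct : √(d * (2 ^ J) ^ d * (4 * flowEnergy d J) / n) ≤ 4 * √d := by
    refine Real.sqrt_le_iff.2 ⟨by positivity, ?_⟩
    rw [mul_pow, Real.sq_sqrt d.cast_nonneg, div_le_iff₀ hn']
    calc d * (2 ^ J) ^ d * (4 * flowEnergy d J) ≤ d * (2 ^ J) ^ d * (4 * 3) := by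
          gcongr
          exact flowEnergy_le_of_three_le hd J
      _ ≤ d * n * (4 * 3) := by gcongr
      _ ≤ 4 ^ 2 * d * n := by nlinarith only [mul_nonneg d.cast_nonneg hn'.le (α := ℝ)]
  calc dyadicRate d n J ≤ 2 * √d / 2 ^ J + 1 / 2 ^ J * (4 * √d) := by
        unfold dyadicRate
        gcongr
    _ = 12 * √d / (2 * 2 ^ J) := by ring
    _ ≤ 16 * √d / (n : ℝ) ^ (1 / d : ℝ) := by gcongr; norm_num

end ChoiceOfScale

/-- Quantitative form of Theorem 3, with explicit constants. -/
theorem expected_W1_rate_quantitative {d n : ℕ} (hn : 2 ≤ n)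
    (Ω : Type*) [MeasurableSpace Ω] (P : Measure Ω) [IsProbabilityMeasure P]
    (X Y : Fin n → Ω → (Fin d → ℝ))
    (hXmeas : ∀ k, Measurable (X k)) (hYmeas : ∀ k, Measurable (Y k))
    (hXcube : ∀ k ω i, X k ω i ∈ Set.Icc (0 : ℝ) 1)
    (hYcube : ∀ k ω i, Y k ω i ∈ Set.Icc (0 : ℝ) 1)
    (hpair : ∀ j k, j ≠ k →
      IndepFun (fun ω => (X j ω, Y j ω)) (fun ω => (X k ω, Y k ω)) P)
    (hid : ∀ k, P.map (X k) = P.map (Y k)) :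
    (d = 1 →
      ∫⁻ ω, W1 (empMeasure X ω) (empMeasure Y ω) ∂P
        ≤ ENNReal.ofReal (2 / Real.sqrt n)) ∧
    (d = 2 →
      ∫⁻ ω, W1 (empMeasure X ω) (empMeasure Y ω) ∂P
        ≤ ENNReal.ofReal (10 * Real.sqrt ((1 + Real.log n) / n))) ∧
    (3 ≤ d →
      ∫⁻ ω, W1 (empMeasure X ω) (empMeasure Y ω) ∂P
        ≤ ENNReal.ofReal (16 * Real.sqrt d / (n : ℝ) ^ (1 / d : ℝ))) := by
  have hn_pos : 0 < n := two_pos.trans_le hn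
  have hsample : IsMatchedSample P X Y := ⟨hXmeas, hYmeas, hpair, hid⟩
  have hbound := hsample.lintegral_W1_empMeasure_le_dyadicRate hn_pos hXcube hYcube
  refine ⟨?_, ?_, fun hd => ?_⟩
  · rintro rfl
    obtain ⟨J, hJ⟩ := exists_dyadicRate_one_le hn_pos
    exact (hbound J).trans (ENNReal.ofReal_le_ofReal hJ)
  · rintro rfl
    obtain ⟨J, hJ⟩ := exists_dyadicRate_two_le hn_pos
    exact (hbound J).trans (ENNReal.ofReal_le_ofReal hJ)
  · obtain ⟨J, hJ⟩ := exists_dyadicRate_le_of_three_le hd hn_pos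
    exact (hbound J).trans (ENNReal.ofReal_le_ofReal hJ)
end
end

section
/- Let (Ω, 𝒜, ℙ) be a probability space and 𝒜₁, 𝒜₂ ⊂ 𝒜 sub-σ-algebras. If φ and ψ are complex-valued random variables, measurable with respect to 𝒜₁ and 𝒜₂ respectively, with |φ| ≤ 1 and |ψ| ≤ 1 everywhere, then |Cov(φ,ψ)| = |E((φ − E φ)(ψ̄ − E ψ̄))| ≤ 16·α(𝒜₁,𝒜₂). -/
open MeasureTheory ProbabilityTheory

noncomputable section

/-- The Rosenblatt mixing coefficient `α(𝒜₁, 𝒜₂)` of two sub-σ-algebras. -/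
def rosenblattAlpha {Ω : Type*} [MeasurableSpace Ω] (P : Measure Ω)
    (m1 m2 : MeasurableSpace Ω) : ℝ :=
  sSup {r | ∃ A B : Set Ω, MeasurableSet[m1] A ∧ MeasurableSet[m2] B ∧
    r = |(P (A ∩ B)).toReal - (P A).toReal * (P B).toReal|}

/-!
A bounded `m`-measurable `X` satisfies `|Cov(X, Y)| ≤ C E|E[Y - E Y | m]|`, and since the
conditional expectation has mean zero, its `L¹` norm is twice its integral over the `m`-measurable
set `A` where it is nonnegative. So `X` may be replaced by the indicator of `A` at the cost of a
factor `2C`. Doing this to both arguments leaves the covariance of two indicators, which is at most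
`α`. For complex variables, rotate `φ` so that the covariance becomes a nonnegative real number; it
is then the sum of the two real covariances of the real parts and of the imaginary parts. This
yields the constant `8` in place of `16`.
-/

section RosenblattAlpha

variable {Ω : Type*} {m1 m2 mΩ : MeasurableSpace Ω} {P : Measure Ω} {A B : Set Ω}

theorem rosenblattAlpha_nonneg : 0 ≤ rosenblattAlpha P m1 m2 :=
  Real.sSup_nonneg (by rintro _ ⟨_, _, -, -, rfl⟩; exact abs_nonneg _)

variable [IsProbabilityMeasure P]

theorem abs_measureReal_inter_sub_mul_le_one (A B : Set Ω) :
    |P.real (A ∩ B) - P.real A * P.real B| ≤ 1 :=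
  abs_sub_le_of_nonneg_of_le measureReal_nonneg measureReal_le_one
    (mul_nonneg measureReal_nonneg measureReal_nonneg)
    (mul_le_one₀ measureReal_le_one measureReal_nonneg measureReal_le_one)

theorem abs_measureReal_inter_sub_mul_le_rosenblattAlpha
    (hA : MeasurableSet[m1] A) (hB : MeasurableSet[m2] B) :
    |P.real (A ∩ B) - P.real A * P.real B| ≤ rosenblattAlpha P m1 m2 := by
  refine le_csSup ⟨1, ?_⟩ ⟨A, B, hA, hB, rfl⟩
  rintro _ ⟨A', B', -, -, rfl⟩
  exact abs_measureReal_inter_sub_mul_le_one A' B'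

end RosenblattAlpha

section Integral

variable {Ω : Type*} {m mΩ : MeasurableSpace Ω} {μ : Measure Ω} {f h : Ω → ℝ} {C : ℝ}

theorem nonneg_of_ae_abs_le [NeZero μ] (hfC : ∀ᵐ ω ∂μ, |f ω| ≤ C) : 0 ≤ C :=
  let ⟨_, hω⟩ := hfC.exists
  (abs_nonneg _).trans hω

theorem integral_abs_eq_two_mul_setIntegral_nonneg (hf : Integrable f μ) (hf0 : ∫ ω, f ω ∂μ = 0) :
    ∫ ω, |f ω| ∂μ = 2 * ∫ ω in {ω | 0 ≤ f ω}, f ω ∂μ := by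
  have hs : NullMeasurableSet {ω | 0 ≤ f ω} μ :=
    aestronglyMeasurable_const.nullMeasurableSet_le hf.1
  have hpos : ∀ ω, (f ω)⁺ = {ω | 0 ≤ f ω}.indicator f ω := fun ω ↦ by
    by_cases hω : 0 ≤ f ω
    · simp [hω]
    · simp [hω, (not_le.1 hω).le]
  rw [integral_abs_eq_two_mul_integral_posPart_sub_integral hf, hf0, sub_zero]
  simp_rw [hpos, integral_indicator₀ hs]

theorem integral_mul_condExp (hm : m ≤ mΩ) [SigmaFinite (μ.trim hm)]
    (hf : AEStronglyMeasurable[m] f μ) (hfh : Integrable (f * h) μ) (hh : Integrable h μ) :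
    ∫ ω, f ω * (μ[h | m]) ω ∂μ = ∫ ω, f ω * h ω ∂μ := by
  have hpull : μ[f * h | m] =ᵐ[μ] f * μ[h | m] :=
    condExp_mul_of_aestronglyMeasurable_left hf hfh hh
  exact (integral_congr_ae hpull).symm.trans (integral_condExp hm)

theorem exists_abs_integral_mul_le_two_mul_setIntegral (hm : m ≤ mΩ) [SigmaFinite (μ.trim hm)]
    (hf : AEStronglyMeasurable[m] f μ) (hfC : ∀ᵐ ω ∂μ, |f ω| ≤ C)
    (hh : Integrable h μ) (hh0 : ∫ ω, h ω ∂μ = 0) :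
    ∃ A, MeasurableSet[m] A ∧ |∫ ω, f ω * h ω ∂μ| ≤ 2 * C * ∫ ω in A, h ω ∂μ := by
  have hA : MeasurableSet[m] {ω | 0 ≤ (μ[h | m]) ω} :=
    stronglyMeasurable_condExp.measurable measurableSet_Ici
  have hfh : Integrable (f * h) μ := hh.bdd_mul (hf.mono hm) hfC
  have hbound : ∀ᵐ ω ∂μ, ‖f ω * (μ[h | m]) ω‖ ≤ C * |(μ[h | m]) ω| := by
    filter_upwards [hfC] with ω hω
    rw [norm_mul]
    exact mul_le_mul_of_nonneg_right hω (abs_nonneg _)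
  refine ⟨_, hA, ?_⟩
  calc |∫ ω, f ω * h ω ∂μ|
      = |∫ ω, f ω * (μ[h | m]) ω ∂μ| := by rw [integral_mul_condExp hm hf hfh hh]
    _ ≤ ∫ ω, C * |(μ[h | m]) ω| ∂μ :=
        norm_integral_le_of_norm_le (integrable_condExp.abs.const_mul C) hbound
    _ = C * (2 * ∫ ω in {ω | 0 ≤ (μ[h | m]) ω}, (μ[h | m]) ω ∂μ) := by
        rw [integral_const_mul, integral_abs_eq_two_mul_setIntegral_nonneg integrable_condExp
          ((integral_condExp hm).trans hh0)]
    _ = 2 * C * ∫ ω in {ω | 0 ≤ (μ[h | m]) ω}, h ω ∂μ := by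
        rw [setIntegral_condExp hm hh hA]
        ring

end Integral

section RealCovariance

variable {Ω : Type*} {m m1 m2 mΩ : MeasurableSpace Ω} {P : Measure Ω} [IsProbabilityMeasure P]
  {X Y : Ω → ℝ} {A B : Set Ω} {C D : ℝ}

theorem integral_sub_integral_eq_zero (hY : Integrable Y P) :
    ∫ ω, (Y ω - ∫ x, Y x ∂P) ∂P = 0 := by
  simp [integral_sub hY (integrable_const _)]

theorem covariance_eq_integral_mul_sub (hY : Integrable Y P)
    (hXY : Integrable (fun ω ↦ X ω * (Y ω - ∫ x, Y x ∂P)) P) :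
    cov[X, Y; P] = ∫ ω, X ω * (Y ω - ∫ x, Y x ∂P) ∂P := by
  have hY' : Integrable (fun ω ↦ Y ω - ∫ x, Y x ∂P) P := hY.sub (integrable_const _)
  simp_rw [covariance, sub_mul (X _)]
  rw [integral_sub hXY (hY'.const_mul _), integral_const_mul,
    integral_sub_integral_eq_zero hY, mul_zero, sub_zero]

theorem covariance_indicator_one_left (hA : MeasurableSet A) (hY : Integrable Y P) :
    cov[A.indicator 1, Y; P] = ∫ ω in A, (Y ω - ∫ x, Y x ∂P) ∂P := by
  have hmul : (fun ω ↦ A.indicator 1 ω * (Y ω - ∫ x, Y x ∂P)) =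
      A.indicator fun ω ↦ Y ω - ∫ x, Y x ∂P := by
    ext ω
    by_cases hω : ω ∈ A <;> simp [hω]
  have hint : Integrable (fun ω ↦ A.indicator 1 ω * (Y ω - ∫ x, Y x ∂P)) P :=
    hmul ▸ (hY.sub (integrable_const _)).indicator hA
  rw [covariance_eq_integral_mul_sub hY hint, hmul, integral_indicator hA]

theorem covariance_indicator_one_indicator_one (hA : MeasurableSet A) (hB : MeasurableSet B) :
    cov[A.indicator 1, B.indicator 1; P] = P.real (A ∩ B) - P.real A * P.real B := by
  have memLp_indicator {S : Set Ω} (hS : MeasurableSet S) :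
      MemLp (S.indicator (1 : Ω → ℝ)) 2 P := (memLp_const 1).indicator hS
  rw [covariance_eq_sub (memLp_indicator hA) (memLp_indicator hB), ← Set.inter_indicator_one,
    integral_indicator_one hA, integral_indicator_one hB, integral_indicator_one (hA.inter hB)]

theorem exists_abs_covariance_le_two_mul_covariance_indicator (hm : m ≤ mΩ)
    (hX : AEStronglyMeasurable[m] X P) (hXC : ∀ᵐ ω ∂P, |X ω| ≤ C) (hY : Integrable Y P) :
    ∃ A, MeasurableSet[m] A ∧ |cov[X, Y; P]| ≤ 2 * C * cov[A.indicator 1, Y; P] := by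
  have hY' : Integrable (fun ω ↦ Y ω - ∫ x, Y x ∂P) P := hY.sub (integrable_const _)
  obtain ⟨A, hA, hle⟩ := exists_abs_integral_mul_le_two_mul_setIntegral hm hX hXC hY'
    (integral_sub_integral_eq_zero hY)
  refine ⟨A, hA, ?_⟩
  rwa [covariance_eq_integral_mul_sub hY (hY'.bdd_mul (hX.mono hm) hXC),
    covariance_indicator_one_left (hm _ hA) hY]

theorem abs_covariance_le_four_mul_rosenblattAlpha (hm1 : m1 ≤ mΩ) (hm2 : m2 ≤ mΩ)
    (hX : AEStronglyMeasurable[m1] X P) (hY : AEStronglyMeasurable[m2] Y P)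
    (hXC : ∀ᵐ ω ∂P, |X ω| ≤ C) (hYD : ∀ᵐ ω ∂P, |Y ω| ≤ D) :
    |cov[X, Y; P]| ≤ 4 * C * D * rosenblattAlpha P m1 m2 := by
  have hC : 0 ≤ C := nonneg_of_ae_abs_le hXC
  have hD : 0 ≤ D := nonneg_of_ae_abs_le hYD
  obtain ⟨A, hA, hXA⟩ := exists_abs_covariance_le_two_mul_covariance_indicator hm1 hX hXC
    (Integrable.of_bound (hY.mono hm2) D hYD)
  obtain ⟨B, hB, hYB⟩ := exists_abs_covariance_le_two_mul_covariance_indicator hm2 hY hYD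
    ((integrable_const 1).indicator (hm1 _ hA) : Integrable (A.indicator (1 : Ω → ℝ)) P)
  calc |cov[X, Y; P]|
      ≤ 2 * C * cov[Y, A.indicator 1; P] := by rwa [covariance_comm Y]
    _ ≤ 2 * C * (2 * D * cov[A.indicator 1, B.indicator 1; P]) := by
        rw [covariance_comm (A.indicator 1)]
        gcongr
        exact (le_abs_self _).trans hYB
    _ ≤ 2 * C * (2 * D * rosenblattAlpha P m1 m2) := by
        rw [covariance_indicator_one_indicator_one (hm1 _ hA) (hm2 _ hB)]
        gcongr
        exact (le_abs_self _).trans (abs_measureReal_inter_sub_mul_le_rosenblattAlpha hA hB)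
    _ = 4 * C * D * rosenblattAlpha P m1 m2 := by ring

end RealCovariance

section ConjCovariance

open RCLike

variable {Ω 𝕜 : Type*} [RCLike 𝕜] {m1 m2 mΩ : MeasurableSpace Ω} {P : Measure Ω}
  {φ ψ : Ω → 𝕜} {C D : ℝ}

/-- The covariance `E((φ - E φ)(ψ̄ - E ψ̄))` of two real or complex random variables, linear in
`φ` and conjugate-linear in `ψ`; Mathlib's `covariance` is for real random variables only. -/
def conjCovariance (φ ψ : Ω → 𝕜) (P : Measure Ω) : 𝕜 :=
  ∫ ω, (φ ω - ∫ x, φ x ∂P) * (starRingEnd 𝕜 (ψ ω) - ∫ x, starRingEnd 𝕜 (ψ x) ∂P) ∂P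

theorem conjCovariance_const_mul_left (c : 𝕜) :
    conjCovariance (fun ω ↦ c * φ ω) ψ P = c * conjCovariance φ ψ P := by
  simp_rw [conjCovariance, integral_const_mul, ← mul_sub, mul_assoc, integral_const_mul]

theorem re_conjCovariance [IsFiniteMeasure P] (hφ : MemLp φ 2 P) (hψ : MemLp ψ 2 P) :
    re (conjCovariance φ ψ P) =
      cov[fun ω ↦ re (φ ω), fun ω ↦ re (ψ ω); P] + cov[fun ω ↦ im (φ ω), fun ω ↦ im (ψ ω); P] := by
  have hφi := hφ.integrable one_le_two
  have hψi := hψ.integrable one_le_two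
  set Φ : Ω → 𝕜 := fun ω ↦ φ ω - ∫ x, φ x ∂P
  set Ψ : Ω → 𝕜 := fun ω ↦ ψ ω - ∫ x, ψ x ∂P
  have hΦ : MemLp Φ 2 P := hφ.sub (memLp_const _)
  have hΨ : MemLp Ψ 2 P := hψ.sub (memLp_const _)
  calc re (conjCovariance φ ψ P)
      = re (∫ ω, Φ ω * starRingEnd 𝕜 (Ψ ω) ∂P) := by
        simp_rw [conjCovariance, integral_conj, ← map_sub, Φ, Ψ]
    _ = ∫ ω, re (Φ ω * starRingEnd 𝕜 (Ψ ω)) ∂P := (integral_re (hΦ.integrable_mul hΨ.star)).symm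
    _ = ∫ ω, (re (Φ ω) * re (Ψ ω) + im (Φ ω) * im (Ψ ω)) ∂P := by simp [mul_re]
    _ = ∫ ω, re (Φ ω) * re (Ψ ω) ∂P + ∫ ω, im (Φ ω) * im (Ψ ω) ∂P :=
        integral_add (hΦ.re.integrable_mul hΨ.re) (hΦ.im.integrable_mul hΨ.im)
    _ = _ := by
        simp_rw [covariance, integral_re hφi, integral_re hψi, integral_im hφi, integral_im hψi,
          ← map_sub, Φ, Ψ]

variable [IsProbabilityMeasure P]

theorem re_conjCovariance_le_eight_mul_rosenblattAlpha (hm1 : m1 ≤ mΩ) (hm2 : m2 ≤ mΩ)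
    (hφ : AEStronglyMeasurable[m1] φ P) (hψ : AEStronglyMeasurable[m2] ψ P)
    (hφC : ∀ᵐ ω ∂P, ‖φ ω‖ ≤ C) (hψD : ∀ᵐ ω ∂P, ‖ψ ω‖ ≤ D) :
    re (conjCovariance φ ψ P) ≤ 8 * C * D * rosenblattAlpha P m1 m2 := by
  have hre := abs_covariance_le_four_mul_rosenblattAlpha hm1 hm2 hφ.re hψ.re
    (hφC.mono fun ω ↦ (abs_re_le_norm (φ ω)).trans)
    (hψD.mono fun ω ↦ (abs_re_le_norm (ψ ω)).trans)
  have him := abs_covariance_le_four_mul_rosenblattAlpha hm1 hm2 hφ.im hψ.im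
    (hφC.mono fun ω ↦ (abs_im_le_norm (φ ω)).trans)
    (hψD.mono fun ω ↦ (abs_im_le_norm (ψ ω)).trans)
  rw [re_conjCovariance (.of_bound (hφ.mono hm1) C hφC) (.of_bound (hψ.mono hm2) D hψD)]
  linarith [le_of_abs_le hre, le_of_abs_le him]

theorem abs_cov_le_mixing_general (hm1 : m1 ≤ mΩ) (hm2 : m2 ≤ mΩ)
    (hφ : AEStronglyMeasurable[m1] φ P) (hψ : AEStronglyMeasurable[m2] ψ P)
    (hφC : ∀ᵐ ω ∂P, ‖φ ω‖ ≤ C) (hψD : ∀ᵐ ω ∂P, ‖ψ ω‖ ≤ D) :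
    ‖conjCovariance φ ψ P‖ ≤ 8 * C * D * rosenblattAlpha P m1 m2 := by
  obtain ⟨c, hc, hrot⟩ := exists_norm_eq_mul_self (conjCovariance φ ψ P)
  have hcφ : ∀ᵐ ω ∂P, ‖c * φ ω‖ ≤ C := by simpa only [norm_mul, hc, one_mul] using hφC
  calc ‖conjCovariance φ ψ P‖
      = re (conjCovariance (fun ω ↦ c * φ ω) ψ P) := by
        rw [conjCovariance_const_mul_left, ← hrot, ofReal_re]
    _ ≤ 8 * C * D * rosenblattAlpha P m1 m2 :=
        re_conjCovariance_le_eight_mul_rosenblattAlpha hm1 hm2 (hφ.const_mul c) hψ hcφ hψD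

end ConjCovariance

/-- For complex random variables `φ, ψ` bounded by one and measurable with respect
to sub-σ-algebras `𝒜₁, 𝒜₂`, one has `|Cov(φ,ψ)| ≤ 16 α(𝒜₁,𝒜₂)`. -/
theorem abs_cov_le_mixing {Ω : Type*} [mΩ : MeasurableSpace Ω]
    (P : Measure Ω) [IsProbabilityMeasure P]
    (m1 m2 : MeasurableSpace Ω) (hm1 : m1 ≤ mΩ) (hm2 : m2 ≤ mΩ)
    (φ ψ : Ω → ℂ) (hφ : Measurable[m1] φ) (hψ : Measurable[m2] ψ)
    (hφ1 : ∀ ω, ‖φ ω‖ ≤ 1) (hψ1 : ∀ ω, ‖ψ ω‖ ≤ 1) :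
    ‖∫ ω, (φ ω - ∫ x, φ x ∂P) *
        (starRingEnd ℂ (ψ ω) - ∫ x, starRingEnd ℂ (ψ x) ∂P) ∂P‖
      ≤ 16 * @rosenblattAlpha Ω mΩ P m1 m2 := by
  have hle := abs_cov_le_mixing_general hm1 hm2 hφ.aestronglyMeasurable hψ.aestronglyMeasurable
    (P := P) (.of_forall hφ1) (.of_forall hψ1)
  exact hle.trans (by linarith [rosenblattAlpha_nonneg (P := P) (m1 := m1) (m2 := m2)])
end
end
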